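/- arXiv:1701.03470 — 2 statements merged into one kernel-verified Lean document; each statement's English description precedes it below -/
import Mathlib

section
/- Let ℓ_1, ..., ℓ_n be nonzero linear forms in K[x_1,...,x_k], where repetitions and proportional forms are allowed. Then the quotient T/⟨ℓ_1 y_1, ℓ_2 y_2, ..., ℓ_n y_n⟩ has depth at least k with respect to the graded maximal ideal ⟨x_1,...,x_k,y_1,...,y_n⟩: there exists a regular sequence of length k on T/⟨ℓ_1 y_1,...,ℓ_n y_n⟩ consisting of elements of ⟨x_1,...,x_k,y_1,...,y_n⟩ (equivalently, the projective dimension of this quotient over T is at most n). -/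
set_option synthInstance.maxHeartbeats 1000000
set_option maxHeartbeats 1000000

open MvPolynomial Finset
section Leading

variable {K : Type*} [Field K] {σ : Type*}

/-- polynomials of weighted degree `< N` -/
def WF (w : σ → ℕ) (N : ℕ) : Submodule K (MvPolynomial σ K) where
  carrier := {g | ∀ d, coeff d g ≠ 0 → Finsupp.weight w d < N}
  zero_mem' := by intro d hd; simp at hd
  add_mem' := by
    intro a b ha hb d hd
    by_cases h : coeff d a = 0
    · apply hb; intro h'; apply hd; simp [h, h']
    · exact ha d h
  smul_mem' := by
    intro c a ha d hd
    apply ha; intro h; apply hd; simp [h]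

lemma WF_mono (w : σ → ℕ) {N M : ℕ} (h : N ≤ M) : (WF w N : Submodule K (MvPolynomial σ K)) ≤ WF w M :=
  fun _ hg d hd => (hg d hd).trans_le h

lemma WF_mul (w : σ → ℕ) {N M : ℕ} {g h : MvPolynomial σ K} (hg : g ∈ WF w N)
    (hh : h ∈ WF w (M + 1)) : g * h ∈ WF w (N + M) := by
  classical
  intro d hd
  rw [coeff_mul] at hd
  obtain ⟨p, hp, hne⟩ := Finset.exists_ne_zero_of_sum_ne_zero hd
  have h1 := hg p.1 (left_ne_zero_of_mul hne)
  have h2 := hh p.2 (right_ne_zero_of_mul hne)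
  rw [← Finset.HasAntidiagonal.mem_antidiagonal.mp hp, map_add]
  omega

lemma WF_zero (w : σ → ℕ) {g : MvPolynomial σ K} (hg : g ∈ WF w 0) : g = 0 := by
  ext d
  by_contra h
  exact absurd (hg d h) (by simp)

lemma exists_WF (w : σ → ℕ) (g : MvPolynomial σ K) : ∃ N, g ∈ WF w N := by
  refine ⟨g.support.sup (Finsupp.weight w) + 1, fun d hd => ?_⟩
  exact Nat.lt_succ_of_le (Finset.le_sup (f := Finsupp.weight w) (mem_support_iff.mpr hd))

lemma monomial_WF (w : σ → ℕ) (a : σ →₀ ℕ) (c : K) {N : ℕ} (h : Finsupp.weight w a < N) :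
    monomial a c ∈ WF w N := by
  classical
  intro d hd
  rw [coeff_monomial] at hd
  split_ifs at hd with h1
  · rwa [← h1]
  · simp at hd

/-- `g` equals the monomial `a` plus lower terms -/
def LRel (w : σ → ℕ) (a : σ →₀ ℕ) (g : MvPolynomial σ K) : Prop :=
  g - monomial a 1 ∈ WF w (Finsupp.weight w a)

lemma LRel.mem {w : σ → ℕ} {a : σ →₀ ℕ} {g : MvPolynomial σ K} (h : LRel w a g) :
    g ∈ WF w (Finsupp.weight w a + 1) := by
  have := (WF w (Finsupp.weight w a + 1)).add_mem (WF_mono w (Nat.le_succ _) h)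
    (monomial_WF w a (1 : K) (Nat.lt_succ_self _))
  simpa using this

lemma LRel.one (w : σ → ℕ) : LRel w 0 (1 : MvPolynomial σ K) := by
  unfold LRel
  have : (1 : MvPolynomial σ K) - monomial 0 1 = 0 := by simp
  rw [this]; exact Submodule.zero_mem _

lemma LRel.mul {w : σ → ℕ} {a b : σ →₀ ℕ} {g h : MvPolynomial σ K} (hg : LRel w a g)
    (hh : LRel w b h) : LRel w (a + b) (g * h) := by
  unfold LRel
  have e : g * h - monomial (a + b) 1
      = (g - monomial a 1) * h + (h - monomial b 1) * monomial a 1 := by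
    have : (monomial (a + b) (1 : K)) = monomial a 1 * monomial b 1 := by simp [monomial_mul]
    rw [this]; ring
  rw [e, map_add]
  refine Submodule.add_mem _ (WF_mul w hg hh.mem) ?_
  rw [add_comm]
  exact WF_mul w hh (monomial_WF w a (1 : K) (Nat.lt_succ_self _))

lemma LRel.pow {w : σ → ℕ} {a : σ →₀ ℕ} {g : MvPolynomial σ K} (hg : LRel w a g) (m : ℕ) :
    LRel w (m • a) (g ^ m) := by
  induction m with
  | zero => simpa using LRel.one w
  | succ m ih => rw [pow_succ, succ_nsmul]; exact ih.mul hg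

lemma LRel.prod {w : σ → ℕ} {ι : Type*} (s : Finset ι) (a : ι → σ →₀ ℕ)
    (g : ι → MvPolynomial σ K) (h : ∀ i, LRel w (a i) (g i)) :
    LRel w (∑ i ∈ s, a i) (∏ i ∈ s, g i) := by
  classical
  induction s using Finset.induction_on with
  | empty => simpa using LRel.one w
  | insert i s hi ih => rw [Finset.sum_insert hi, Finset.prod_insert hi]; exact (h i).mul ih

/-- the deformation of monomials -/
noncomputable def defo [Fintype σ] (e : σ → ℕ) (f : σ → MvPolynomial σ K) (a : σ →₀ ℕ) :
    MvPolynomial σ K := ∏ s, (f s ^ (a s / e s) * X s ^ (a s % e s))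

noncomputable def Defo [Fintype σ] (e : σ → ℕ) (f : σ → MvPolynomial σ K) :
    MvPolynomial σ K →ₗ[K] MvPolynomial σ K :=
  (basisMonomials σ K).constr K (defo e f)

lemma Defo_monomial [Fintype σ] (e : σ → ℕ) (f : σ → MvPolynomial σ K) (a : σ →₀ ℕ) :
    Defo e f (monomial a 1) = defo e f a := by
  have := (basisMonomials σ K).constr_basis K (defo e f) a
  simpa [Defo] using this

lemma Defo_X_pow_mul [Fintype σ] (e : σ → ℕ) (he : ∀ s, 0 < e s) (f : σ → MvPolynomial σ K)
    (s : σ) (g : MvPolynomial σ K) :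
    Defo e f (X s ^ e s * g) = f s * Defo e f g := by
  classical
  have : (Defo e f).comp (LinearMap.mulLeft K (X s ^ e s))
      = (LinearMap.mulLeft K (f s)).comp (Defo e f) := by
    apply (basisMonomials σ K).ext
    intro a
    simp only [coe_basisMonomials, LinearMap.comp_apply, LinearMap.mulLeft_apply]
    have : X s ^ e s * monomial a (1 : K) = monomial (Finsupp.single s (e s) + a) 1 := by
      rw [X_pow_eq_monomial, monomial_mul, one_mul]
    rw [this, Defo_monomial, Defo_monomial, defo, defo,
      ← Finset.mul_prod_erase _ _ (Finset.mem_univ s),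
      ← Finset.mul_prod_erase _ (fun t => f t ^ (a t / e t) * X t ^ (a t % e t))
        (Finset.mem_univ s)]
    have h2 : ∀ t ∈ Finset.univ.erase s,
        f t ^ ((Finsupp.single s (e s) + a) t / e t) *
          X t ^ ((Finsupp.single s (e s) + a) t % e t) =
        f t ^ (a t / e t) * X t ^ (a t % e t) := by
      intro t ht
      have : t ≠ s := Finset.ne_of_mem_erase ht
      simp [Finsupp.single_apply, this.symm]
    rw [Finset.prod_congr rfl h2]
    simp only [Finsupp.add_apply, Finsupp.single_eq_same, Nat.add_mod_left,
      Nat.add_div_left _ (he s)]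
    ring
  exact LinearMap.congr_fun this g

lemma Defo_sub_mem [Fintype σ] (w e : σ → ℕ) (f : σ → MvPolynomial σ K)
    (hf : ∀ s, LRel w (Finsupp.single s (e s)) (f s)) (N : ℕ) (g : MvPolynomial σ K)
    (hg : g ∈ WF w (N + 1)) : Defo e f g - g ∈ WF w N := by
  classical
  have key : ∀ a : σ →₀ ℕ, LRel w a (defo e f a) := by
    intro a
    have := LRel.prod (w := w) Finset.univ
      (fun s => (a s / e s) • Finsupp.single s (e s) + (a s % e s) • Finsupp.single s 1)
      (fun s => f s ^ (a s / e s) * X s ^ (a s % e s)) (fun s => by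
        refine ((hf s).pow _).mul (LRel.pow ?_ _)
        unfold LRel
        have : (X s : MvPolynomial σ K) - monomial (Finsupp.single s 1) 1 = 0 := by
          simp [X]
        rw [this]; exact Submodule.zero_mem _)
    suffices ea : a = ∑ s, ((a s / e s) • Finsupp.single s (e s) + (a s % e s) • Finsupp.single s 1) by
      rw [← ea] at this; exact this
    ext t
    simp only [Finsupp.coe_finsetSum, Finset.sum_apply, Finsupp.add_apply, Finsupp.smul_apply,
      Finsupp.single_apply, smul_eq_mul]
    rw [Finset.sum_eq_single t]
    · simp [Nat.div_add_mod']
    · intro b _ hb; simp [hb]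
    · simp
  have : Defo e f g - g = ∑ d ∈ g.support, coeff d g • (defo e f d - monomial d 1) := by
    conv_lhs => rw [g.as_sum]
    rw [map_sum, ← Finset.sum_sub_distrib]
    refine Finset.sum_congr rfl fun d _ => ?_
    have : monomial d (coeff d g) = coeff d g • monomial d (1 : K) := by
      simp [smul_monomial]
    rw [this, map_smul, Defo_monomial, smul_sub]
  rw [this]
  refine Submodule.sum_mem _ fun d hd => Submodule.smul_mem _ _ ?_
  exact WF_mono w (Nat.le_of_lt_succ (hg d (mem_support_iff.mp hd))) (key d)

lemma Defo_bijective [Fintype σ] (w e : σ → ℕ) (f : σ → MvPolynomial σ K)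
    (hf : ∀ s, LRel w (Finsupp.single s (e s)) (f s)) : Function.Bijective (Defo e f) := by
  constructor
  · rw [injective_iff_map_eq_zero]
    intro g hg
    obtain ⟨N, hN⟩ := exists_WF w g
    induction N with
    | zero => exact WF_zero w hN
    | succ N ih =>
      apply ih
      have := Defo_sub_mem w e f hf N g hN
      rw [hg, zero_sub] at this
      simpa using Submodule.neg_mem _ this
  · intro g
    obtain ⟨N, hN⟩ := exists_WF w g
    induction N generalizing g with
    | zero => exact ⟨0, by rw [map_zero, WF_zero w hN]⟩
    | succ N ih =>
      obtain ⟨h, hh⟩ := ih _ (Defo_sub_mem w e f hf N g hN)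
      exact ⟨g - h, by rw [map_sub, hh]; ring⟩

lemma X_pow_weaklyRegular (e : σ → ℕ) (l : List σ) (hl : l.Nodup) :
    RingTheory.Sequence.IsWeaklyRegular (MvPolynomial σ K)
      (l.map fun s => (X s ^ e s : MvPolynomial σ K)) := by
  classical
  induction l using List.reverseRecOn with
  | nil => simp
  | append_singleton l s ih =>
    rw [List.map_append, RingTheory.Sequence.isWeaklyRegular_append_iff]
    have hl' := List.nodup_append.mp hl
    refine ⟨ih hl'.1, ?_⟩
    rw [List.map_singleton, RingTheory.Sequence.isWeaklyRegular_singleton_iff,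
      isSMulRegular_quotient_iff_mem_of_smul_mem]
    have hI : (Ideal.ofList (l.map fun s => (X s ^ e s : MvPolynomial σ K))) =
        Ideal.span ((fun s => monomial s (1 : K)) ''
          ((fun s => Finsupp.single s (e s)) '' {s | s ∈ l})) := by
      unfold Ideal.ofList
      congr 1
      ext x
      simp [X_pow_eq_monomial]
    have hs : s ∉ l := fun h => hl'.2.2 s h s (by simp) rfl
    intro x hx
    simp only [smul_eq_mul, Ideal.mul_top] at hx ⊢
    rw [hI, mem_ideal_span_monomial_image] at hx ⊢
    intro d hd
    obtain ⟨_, ⟨t, ht, rfl⟩, hle⟩ := hx (Finsupp.single s (e s) + d) (by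
      rw [mem_support_iff] at hd ⊢
      rwa [X_pow_eq_monomial, coeff_monomial_mul, one_mul])
    refine ⟨_, ⟨t, ht, rfl⟩, ?_⟩
    have hts : s ≠ t := fun h => hs (h ▸ ht)
    simp only [Finsupp.single_le_iff, Finsupp.add_apply, Finsupp.single_apply, if_neg hts,
      zero_add] at hle ⊢
    exact hle

theorem leading_weaklyRegular [Fintype σ] (w e : σ → ℕ) (he : ∀ s, 0 < e s)
    (f : σ → MvPolynomial σ K)
    (hf : ∀ s, LRel w (Finsupp.single s (e s)) (f s)) (l : List σ) (hl : l.Nodup) :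
    RingTheory.Sequence.IsWeaklyRegular (MvPolynomial σ K) (l.map f) := by
  let E := LinearEquiv.ofBijective (Defo e f) (Defo_bijective w e f hf)
  refine (AddEquiv.isWeaklyRegular_congr (e := E.toAddEquiv) ?_).mp (X_pow_weaklyRegular e l hl)
  rw [List.forall₂_map_left_iff, List.forall₂_map_right_iff, List.forall₂_same]
  intro s _ x
  exact Defo_X_pow_mul e he f s x

end Leading

section SES
open RingTheory.Sequence

lemma ses_weaklyRegular {R : Type*} [CommRing R] (rs : List R) :
    ∀ {M₁ M₂ M₃ : Type _} [AddCommGroup M₁] [AddCommGroup M₂] [AddCommGroup M₃]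
    [Module R M₁] [Module R M₂] [Module R M₃] (f : M₁ →ₗ[R] M₂) (g : M₂ →ₗ[R] M₃)
    (_ : Function.Injective f) (_ : Function.Exact f g) (_ : Function.Surjective g)
    (_ : IsWeaklyRegular M₁ rs) (_ : IsWeaklyRegular M₃ rs), IsWeaklyRegular M₂ rs := by
  induction rs with
  | nil => intros; simp
  | cons r rs ih =>
    intro M₁ M₂ M₃ _ _ _ _ _ _ f g hf hfg hg h1 h3
    rw [isWeaklyRegular_cons_iff] at h1 h3 ⊢
    refine ⟨?_, ?_⟩
    · rw [isSMulRegular_iff_right_eq_zero_of_smul]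
      intro x hx
      have h := isSMulRegular_iff_right_eq_zero_of_smul.mp h3.1 (g x) (by rw [← map_smul, hx, map_zero])
      obtain ⟨y, rfl⟩ := (hfg x).mp h
      rw [← map_smul, map_eq_zero_iff f hf] at hx
      rw [isSMulRegular_iff_right_eq_zero_of_smul.mp h1.1 y hx, map_zero]
    · refine ih (QuotSMulTop.map r f) (QuotSMulTop.map r g) ?_ (QuotSMulTop.map_exact r hfg hg)
        (QuotSMulTop.map_surjective r hg) h1.2 h3.2
      have h0 : Function.Exact (0 : PUnit →ₗ[R] M₁) f := by
        intro y
        rw [map_eq_zero_iff f hf]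
        simp [eq_comm]
      have := QuotSMulTop.map_first_exact_on_four_term_exact_of_isSMulRegular_last h0 hfg h3.1
      rw [injective_iff_map_eq_zero]
      intro y hy
      obtain ⟨z, rfl⟩ := (this y).mp hy
      simp

lemma quot_mul_weaklyRegular {R : Type*} [CommRing R] (rs : List R) (I : Ideal R) (a y : R)
    (hy : ∀ g, y * g ∈ I → g ∈ I)
    (h1 : IsWeaklyRegular (R ⧸ (I ⊔ Ideal.span {a})) rs)
    (h3 : IsWeaklyRegular (R ⧸ (I ⊔ Ideal.span {y})) rs) :
    IsWeaklyRegular (R ⧸ (I ⊔ Ideal.span {a * y})) rs := by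
  have hmem : ∀ (b x : R), x ∈ I ⊔ Ideal.span {b} ↔ ∃ c, x - c * b ∈ I := by
    intro b x
    rw [Submodule.mem_sup]
    constructor
    · rintro ⟨u, hu, v, hv, rfl⟩
      obtain ⟨c, rfl⟩ := Ideal.mem_span_singleton'.mp hv
      exact ⟨c, by simpa using hu⟩
    · rintro ⟨c, hc⟩
      exact ⟨_, hc, c * b, Ideal.mem_span_singleton'.mpr ⟨c, rfl⟩, by ring⟩
  have c1 : (I ⊔ Ideal.span {a}) ≤ Submodule.comap (LinearMap.mulLeft R y) (I ⊔ Ideal.span {a * y}) := by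
    intro x hx
    obtain ⟨c, hc⟩ := (hmem a x).mp hx
    refine (hmem _ _).mpr ⟨c, ?_⟩
    have := I.mul_mem_left y hc
    simp only [LinearMap.mulLeft_apply]
    convert this using 1; ring
  have c2 : (I ⊔ Ideal.span {a * y}) ≤ Submodule.comap LinearMap.id (I ⊔ Ideal.span {y}) := by
    intro x hx
    obtain ⟨c, hc⟩ := (hmem _ x).mp hx
    exact (hmem _ _).mpr ⟨c * a, by rw [mul_assoc]; exact hc⟩
  refine ses_weaklyRegular rs (Submodule.mapQ _ _ (LinearMap.mulLeft R y) c1)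
    (Submodule.mapQ _ _ LinearMap.id c2) ?_ ?_ ?_ h1 h3
  · rw [injective_iff_map_eq_zero]
    intro x hx
    obtain ⟨x, rfl⟩ := Submodule.mkQ_surjective _ x
    simp only [Submodule.mkQ_apply, Submodule.mapQ_apply, Submodule.Quotient.mk_eq_zero,
      LinearMap.mulLeft_apply] at hx ⊢
    obtain ⟨c, hc⟩ := (hmem _ _).mp hx
    refine (hmem _ _).mpr ⟨c, hy _ ?_⟩
    convert hc using 1; ring
  · intro x
    obtain ⟨x, rfl⟩ := Submodule.mkQ_surjective _ x
    simp only [Submodule.mkQ_apply, Submodule.mapQ_apply, Submodule.Quotient.mk_eq_zero,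
      LinearMap.id_apply]
    constructor
    · intro hx
      obtain ⟨c, hc⟩ := (hmem _ _).mp hx
      refine ⟨Submodule.Quotient.mk c, ?_⟩
      rw [Submodule.mapQ_apply, LinearMap.mulLeft_apply, eq_comm, Submodule.Quotient.eq]
      refine (hmem _ _).mpr ⟨0, ?_⟩
      convert hc using 1; ring
    · rintro ⟨c, hc⟩
      obtain ⟨c, rfl⟩ := Submodule.mkQ_surjective _ c
      rw [Submodule.mkQ_apply, Submodule.mapQ_apply, LinearMap.mulLeft_apply, eq_comm,
        Submodule.Quotient.eq] at hc
      obtain ⟨d, hd⟩ := (hmem _ _).mp hc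
      refine (hmem _ _).mpr ⟨c + d * a, ?_⟩
      convert hd using 1; ring
  · intro x
    obtain ⟨x, rfl⟩ := Submodule.mkQ_surjective _ x
    exact ⟨Submodule.Quotient.mk x, by simp⟩

lemma X_nzd {S : Type*} [CommRing S] {ι : Type*} [DecidableEq ι] (i : ι)
    (s : Set (MvPolynomial ι S))
    (hs : ∀ x ∈ s, aeval (fun j => if j = i then (0 : MvPolynomial ι S) else X j) x = x)
    (g : MvPolynomial ι S) (hg : X i * g ∈ Ideal.span s) : g ∈ Ideal.span s := by
  set τ : MvPolynomial ι S →ₐ[S] MvPolynomial ι S :=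
    aeval (fun j => if j = i then (0 : MvPolynomial ι S) else X j) with hτ
  have h1 : ∀ c, ∃ c1, c = τ c + X i * c1 := by
    intro c
    induction c using MvPolynomial.induction_on with
    | C a => exact ⟨0, by simp [hτ]⟩
    | add p q hp hq =>
      obtain ⟨p1, hp⟩ := hp
      obtain ⟨q1, hq⟩ := hq
      exact ⟨p1 + q1, by rw [map_add]; linear_combination hp + hq⟩
    | mul_X p j hp =>
      obtain ⟨p1, hp⟩ := hp
      by_cases hj : j = i
      · subst hj
        exact ⟨p, by simp [hτ, mul_comm]⟩
      · refine ⟨p1 * X j, ?_⟩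
        have : τ (X j) = X j := by simp [hτ, hj]
        rw [map_mul, this]; linear_combination X j * hp
  have h2 : ∀ x ∈ Ideal.span s, τ x ∈ Ideal.span s ∧ ∃ x1 ∈ Ideal.span s, x = τ x + X i * x1 := by
    intro x hx
    induction hx using Submodule.span_induction with
    | mem x hx => 
      rw [hs x hx]
      exact ⟨Ideal.subset_span hx, 0, Submodule.zero_mem _, by simp⟩
    | zero => exact ⟨by simp, 0, Submodule.zero_mem _, by simp⟩
    | add x y _ _ hx hy =>
      obtain ⟨hx, x1, hx1, ex⟩ := hx
      obtain ⟨hy, y1, hy1, ey⟩ := hy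
      rw [map_add]
      exact ⟨Submodule.add_mem _ hx hy, x1 + y1, Submodule.add_mem _ hx1 hy1,
        by linear_combination ex + ey⟩
    | smul c x _ hx =>
      obtain ⟨hx, x1, hx1, ex⟩ := hx
      obtain ⟨c1, ec⟩ := h1 c
      rw [smul_eq_mul, map_mul]
      refine ⟨Ideal.mul_mem_left _ _ hx, c1 * τ x + c * x1,
        Submodule.add_mem _ (Ideal.mul_mem_left _ _ hx) (Ideal.mul_mem_left _ _ hx1), ?_⟩
      linear_combination c * ex + τ x * ec
  obtain ⟨_, x1, hx1, ex⟩ := h2 _ hg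
  have : τ (X i * g) = 0 := by simp [hτ]
  rw [this, zero_add] at ex
  have hreg : IsRegular (X i : MvPolynomial ι S) := isRegular_X
  rwa [hreg.left ex]

end SES
section Base
open RingTheory.Sequence

lemma constr_mem {K V M ι : Type*} [Field K] [AddCommGroup V] [Module K V] [AddCommGroup M]
    [Module K M] (b : Module.Basis ι K V) (g : ι → M) (W : Submodule K M) (h : ∀ i, g i ∈ W)
    (v : V) : b.constr K g v ∈ W := by
  rw [Module.Basis.constr_apply]
  exact Submodule.sum_mem _ fun i _ => W.smul_mem _ (h i)

/-- linear change of variables -/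
noncomputable def chg {K V ι ι' κ : Type*} [Field K] [AddCommGroup V] [Module K V]
    (b : Module.Basis ι K V) (b' : Module.Basis ι' K V) :
    MvPolynomial (ι ⊕ κ) K →ₐ[K] MvPolynomial (ι' ⊕ κ) K :=
  aeval (Sum.elim (fun i => b'.constr K (fun t => (X (Sum.inl t) : MvPolynomial (ι' ⊕ κ) K)) (b i))
    (fun j => X (Sum.inr j)))

lemma chg_lin {K V ι ι' κ : Type*} [Field K] [AddCommGroup V] [Module K V]
    (b : Module.Basis ι K V) (b' : Module.Basis ι' K V) (v : V) :
    chg (κ := κ) b b' (b.constr K (fun t => (X (Sum.inl t) : MvPolynomial (ι ⊕ κ) K)) v) =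
      b'.constr K (fun t => (X (Sum.inl t) : MvPolynomial (ι' ⊕ κ) K)) v := by
  have : (chg (κ := κ) b b').toLinearMap.comp
      (b.constr K (fun t => (X (Sum.inl t) : MvPolynomial (ι ⊕ κ) K))) =
      b'.constr K (fun t => (X (Sum.inl t) : MvPolynomial (ι' ⊕ κ) K)) := by
    apply b.ext
    intro i
    simp [chg]
  exact LinearMap.congr_fun this v

lemma chg_inr {K V ι ι' κ : Type*} [Field K] [AddCommGroup V] [Module K V]
    (b : Module.Basis ι K V) (b' : Module.Basis ι' K V) (j : κ) :
    chg (κ := κ) b b' (X (Sum.inr j)) = X (Sum.inr j) := by simp [chg]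

lemma chg_chg {K V ι ι' κ : Type*} [Field K] [AddCommGroup V] [Module K V]
    (b : Module.Basis ι K V) (b' : Module.Basis ι' K V) :
    (chg (κ := κ) b' b).comp (chg b b') = AlgHom.id K _ := by
  apply MvPolynomial.algHom_ext
  rintro (i | j)
  · have h1 : (X (Sum.inl i) : MvPolynomial (ι ⊕ κ) K) =
      b.constr K (fun t => (X (Sum.inl t) : MvPolynomial (ι ⊕ κ) K)) (b i) := by simp
    rw [AlgHom.comp_apply, h1, chg_lin, chg_lin]; rfl
  · rw [AlgHom.comp_apply, chg_inr, chg_inr]; rfl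

/-- linear forms in the `x` -/
noncomputable def lx (K : Type*) [Field K] (k n : ℕ) :
    (Fin k → K) →ₗ[K] MvPolynomial (Fin n) (MvPolynomial (Fin k) K) :=
  (Pi.basisFun K (Fin k)).constr K fun j => C (X j)

/-- linear forms in the `y` -/
noncomputable def ly (K : Type*) [Field K] (k n : ℕ) :
    (Fin n → K) →ₗ[K] MvPolynomial (Fin n) (MvPolynomial (Fin k) K) :=
  (Pi.basisFun K (Fin n)).constr K fun j => X j

lemma exists_psi {K ι : Type*} [Field K] (k n : ℕ) (b : Module.Basis ι K (Fin n → K)) :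
    ∃ ψ : MvPolynomial (ι ⊕ Fin k) K ≃ₐ[K] MvPolynomial (Fin n) (MvPolynomial (Fin k) K),
      (∀ j, ψ (X (Sum.inr j)) = C (X j)) ∧
      (∀ v, ψ (b.constr K (fun t => (X (Sum.inl t) : MvPolynomial (ι ⊕ Fin k) K)) v)
        = ly K k n v) := by
  let θ : MvPolynomial (ι ⊕ Fin k) K ≃ₐ[K] MvPolynomial (Fin n ⊕ Fin k) K :=
    AlgEquiv.ofAlgHom (chg b (Pi.basisFun K (Fin n))) (chg (Pi.basisFun K (Fin n)) b)
      (chg_chg _ _) (chg_chg _ _)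
  refine ⟨θ.trans (sumAlgEquiv K (Fin n) (Fin k)), ?_, ?_⟩
  · intro j
    have : θ (X (Sum.inr j)) = X (Sum.inr j) := chg_inr _ _ j
    rw [AlgEquiv.trans_apply, this, sumAlgEquiv_X_inr]
  · intro v
    have : θ (b.constr K (fun t => (X (Sum.inl t) : MvPolynomial (ι ⊕ Fin k) K)) v) = _ :=
      chg_lin _ _ v
    rw [AlgEquiv.trans_apply, this]
    have h2 : (sumAlgEquiv K (Fin n) (Fin k)).toLinearMap.comp
      ((Pi.basisFun K (Fin n)).constr K
        (fun t => (X (Sum.inl t) : MvPolynomial (Fin n ⊕ Fin k) K))) = ly K k n := by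
      apply (Pi.basisFun K (Fin n)).ext
      intro i
      rw [ly, LinearMap.comp_apply, Module.Basis.constr_basis, Module.Basis.constr_basis]
      exact sumAlgEquiv_X_inl _ _ _ i
    exact LinearMap.congr_fun h2 v

/-- pivots -/
def Piv {K : Type*} [Field K] {k : ℕ} (W : Submodule K (Fin k → K)) (p : Fin k) : Prop :=
  ∃ v ∈ W, v p = 1 ∧ ∀ j, p < j → v j = 0

lemma piv_span {K : Type*} [Field K] {k : ℕ} (W W' : Submodule K (Fin k → K))
    (r : Fin k → Fin k → K) (hr : ∀ p, Piv W p → r p ∈ W ∧ r p p = 1 ∧ ∀ j, p < j → r p j = 0)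
    (h : ∀ p, Piv W p → r p ∈ W') : W ≤ W' := by
  have key : ∀ m : ℕ, ∀ v ∈ W, (∀ j : Fin k, m ≤ j.val → v j = 0) → v ∈ W' := by
    intro m
    induction m with
    | zero =>
      intro v _ h0
      have : v = 0 := funext fun j => h0 j (Nat.zero_le _)
      rw [this]; exact W'.zero_mem
    | succ m ih =>
      intro v hv h0
      by_cases hm : ∃ p : Fin k, p.val = m ∧ v p ≠ 0
      · obtain ⟨p, hp, hvp⟩ := hm
        have hP : Piv W p := ⟨(v p)⁻¹ • v, W.smul_mem _ hv, by simp [hvp], fun j hj => by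
          simp [h0 j (by have := Fin.lt_def.mp hj; omega)]⟩
        obtain ⟨h1, h2, h3⟩ := hr p hP
        have := ih (v - v p • r p) (W.sub_mem hv (W.smul_mem _ h1)) (fun j hj => by
          by_cases hjp : j = p
          · subst hjp; simp [h2]
          · have : p.val ≠ j.val := fun h => hjp (Fin.ext h.symm)
            simp [h0 j (by omega), h3 j (Fin.lt_def.mpr (by omega))])
        have h5 := W'.add_mem this (W'.smul_mem (v p) (h p hP))
        simpa using h5
      · push Not at hm
        refine ih v hv fun j hj => ?_
        by_cases hjm : j.val = m
        · exact hm j hjm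
        · exact h0 j (by omega)
  exact fun v hv => key k v hv fun j hj => absurd j.isLt (by omega)

lemma piv_indep {K : Type*} [Field K] {k n : ℕ} (L : Fin n → Fin k → K) (c : Fin n → Prop)
    (W : Submodule K (Fin k → K)) (hW : W = Submodule.span K (L '' {i | c i})) :
    LinearIndependent K (Sum.elim (fun i : {i // ¬ c i} => (Pi.single i.1 1 : Fin n → K))
      (fun p : {p // Piv W p} => fun i => L i p.1)) := by
  classical
  rw [Fintype.linearIndependent_iff]
  intro g hg
  simp only [Fintype.sum_sum_type, Sum.elim_inl, Sum.elim_inr] at hg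
  have h1 : ∀ i, c i → ∑ p : {p // Piv W p}, g (Sum.inr p) * L i p.1 = 0 := by
    intro i hi
    have := congrFun hg i
    simp only [Pi.add_apply, Finset.sum_apply, Pi.smul_apply, smul_eq_mul, Pi.zero_apply] at this
    rw [Finset.sum_eq_zero, zero_add] at this
    · exact this
    · intro x _
      rw [Pi.single_apply, if_neg, mul_zero]
      rintro rfl; exact x.2 hi
  have h2 : ∀ v ∈ W, ∑ p : {p // Piv W p}, g (Sum.inr p) * v p.1 = 0 := by
    intro v hv
    rw [hW] at hv
    induction hv using Submodule.span_induction with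
    | mem x hx => obtain ⟨i, hi, rfl⟩ := hx; exact h1 i hi
    | zero => simp
    | add x y _ _ hx hy => simp [mul_add, Finset.sum_add_distrib, hx, hy]
    | smul a x _ hx =>
      have : ∑ p : {p // Piv W p}, g (Sum.inr p) * (a • x) p.1 =
          a * ∑ p : {p // Piv W p}, g (Sum.inr p) * x p.1 := by
        rw [Finset.mul_sum]; refine Finset.sum_congr rfl fun p _ => ?_
        simp only [Pi.smul_apply, smul_eq_mul]; ring
      rw [this, hx, mul_zero]
  have h3 : ∀ p : {p // Piv W p}, g (Sum.inr p) = 0 := by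
    intro p
    induction p using WellFoundedLT.induction with
    | ind p ih =>
    obtain ⟨v, hv, hv1, hv0⟩ := p.2
    have := h2 v hv
    rw [Finset.sum_eq_single p] at this
    · simpa [hv1] using this
    · intro q _ hq
      rcases lt_or_gt_of_ne hq with h | h
      · rw [ih q h, zero_mul]
      · rw [hv0 q.1 h, mul_zero]
    · simp
  rintro (i | p)
  · have := congrFun hg i.1
    simp only [Pi.add_apply, Finset.sum_apply, Pi.smul_apply, smul_eq_mul, Pi.zero_apply, h3,
      zero_mul, Finset.sum_const_zero, add_zero] at this
    rw [Finset.sum_eq_single i] at this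
    · simpa using this
    · intro q _ hq
      rw [Pi.single_apply, if_neg, mul_zero]
      intro h; exact hq (Subtype.ext h.symm)
    · simp
  · exact h3 p

/-- the regular sequence -/
noncomputable def fseq {K : Type*} [Field K] {k n : ℕ} (L : Fin n → Fin k → K) (j : Fin k) :
    MvPolynomial (Fin n) (MvPolynomial (Fin k) K) :=
  C (X j) + (ly K k n (fun i => L i j)) ^ (2 * (j.val + 1))

lemma WF_pow {K : Type*} [Field K] {σ : Type*} (w : σ → ℕ) (g : MvPolynomial σ K)
    (hg : g ∈ WF w 3) (m : ℕ) : g ^ m ∈ WF w (2 * m + 1) := by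
  induction m with
  | zero =>
    have := (LRel.one (K := K) w).mem
    simpa using this
  | succ m ih => 
    rw [pow_succ]
    have h := WF_mul (N := 2 * m + 1) (M := 2) w ih hg
    rwa [show 2 * m + 1 + 2 = 2 * (m + 1) + 1 by ring] at h

lemma base_case {K : Type*} [Field K] {k n : ℕ} (L : Fin n → Fin k → K) (c : Fin n → Prop)
    [DecidablePred c] :
    IsWeaklyRegular (MvPolynomial (Fin n) (MvPolynomial (Fin k) K) ⧸
      Ideal.span (Set.range fun i => if c i then lx K k n (L i) else X i))
      ((List.finRange k).map (fseq L)) := by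
  classical
  obtain ⟨W, hW⟩ : ∃ W, W = Submodule.span K (L '' {i | c i}) := ⟨_, rfl⟩
  have hli := piv_indep L c W hW
  have hr' : ∀ p, ∃ v : Fin k → K, Piv W p → v ∈ W ∧ v p = 1 ∧ ∀ j, p < j → v j = 0 := by
    intro p
    by_cases h : Piv W p
    · obtain ⟨v, hv⟩ := h; exact ⟨v, fun _ => hv⟩
    · exact ⟨0, fun h' => absurd h' h⟩
  choose r hr using hr'
  obtain ⟨ι', b, hb⟩ : ∃ (ι' : Type _)
      (b : Module.Basis (({i // ¬ c i} ⊕ {p // Piv W p}) ⊕ ι') K (Fin n → K)),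
      ∀ s, b (Sum.inl s) = (Sum.elim (fun i : {i // ¬ c i} => (Pi.single i.1 1 : Fin n → K))
      (fun p : {p // Piv W p} => fun i => L i p.1)) s := by
    refine ⟨_, Module.Basis.sumExtend hli, fun s => ?_⟩
    simp only [Module.Basis.sumExtend, Module.Basis.reindex_apply,
      Module.Basis.extend_apply_self]
    rfl
  obtain ⟨ψ, hψ1, hψ2⟩ := exists_psi k n b
  haveI : Fintype (({i // ¬ c i} ⊕ {p // Piv W p}) ⊕ ι') :=
    FiniteDimensional.fintypeBasisIndex b
  let lin := b.constr K (fun t => (X (Sum.inl t) : MvPolynomial ((({i // ¬ c i} ⊕ {p // Piv W p}) ⊕ ι') ⊕ Fin k) K))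
  have hlinb : ∀ t, lin (b t) = X (Sum.inl t) := fun t => b.constr_basis K _ t
  let linx := (Pi.basisFun K (Fin k)).constr K
    (fun t => (X (Sum.inr t) : MvPolynomial ((({i // ¬ c i} ⊕ {p // Piv W p}) ⊕ ι') ⊕ Fin k) K))
  have hlinx : ∀ v, ψ (linx v) = lx K k n v := by
    intro v
    have h2 : ψ.toLinearMap.comp linx = lx K k n := by
      apply (Pi.basisFun K (Fin k)).ext
      intro i
      rw [lx, LinearMap.comp_apply, Module.Basis.constr_basis, Module.Basis.constr_basis]
      exact hψ1 i
    exact LinearMap.congr_fun h2 v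
  let ff : Fin k → MvPolynomial ((({i // ¬ c i} ⊕ {p // Piv W p}) ⊕ ι') ⊕ Fin k) K := fun j =>
    X (Sum.inr j) + lin (fun i => L i j) ^ (2 * (j.val + 1))
  have hff : ∀ j, ψ (ff j) = fseq L j := by
    intro j
    simp only [ff, fseq, map_add, map_pow, hψ1]
    rw [← hψ2]
  let e : (({i // ¬ c i} ⊕ {p // Piv W p}) ⊕ ι') ⊕ Fin k → ℕ
    | Sum.inl (Sum.inl (Sum.inr p)) => 2 * (p.1.val + 1)
    | _ => 1
  let w : (({i // ¬ c i} ⊕ {p // Piv W p}) ⊕ ι') ⊕ Fin k → ℕ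
    | Sum.inl _ => 2
    | Sum.inr j => if Piv W j then 4 * j.val + 3 else 4 * j.val + 5
  let F : (({i // ¬ c i} ⊕ {p // Piv W p}) ⊕ ι') ⊕ Fin k → MvPolynomial ((({i // ¬ c i} ⊕ {p // Piv W p}) ⊕ ι') ⊕ Fin k) K
    | Sum.inl (Sum.inl (Sum.inr p)) => ff p.1
    | Sum.inl (Sum.inl (Sum.inl i)) => X (Sum.inl (Sum.inl (Sum.inl i)))
    | Sum.inl (Sum.inr u) => X (Sum.inl (Sum.inr u))
    | Sum.inr j => if Piv W j then linx (r j) else ff j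
  have he : ∀ s, 0 < e s := by
    rintro (((i | p) | u) | j) <;> simp [e]
  have hX : ∀ s, LRel w (Finsupp.single s 1) (X s : MvPolynomial ((({i // ¬ c i} ⊕ {p // Piv W p}) ⊕ ι') ⊕ Fin k) K) := by
    intro s
    unfold LRel
    have : (X s : MvPolynomial ((({i // ¬ c i} ⊕ {p // Piv W p}) ⊕ ι') ⊕ Fin k) K) - monomial (Finsupp.single s 1) 1 = 0 := by
      simp [X]
    rw [this]; exact Submodule.zero_mem _
  have hXW : ∀ s N, w s < N → (X s : MvPolynomial ((({i // ¬ c i} ⊕ {p // Piv W p}) ⊕ ι') ⊕ Fin k) K) ∈ WF w N := by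
    intro s N h
    apply monomial_WF
    simpa [Finsupp.weight_single] using h
  have hlinW : ∀ v, lin v ∈ WF w 3 := fun v => constr_mem _ _ _ (fun t => hXW _ _ (by simp [w])) v
  have hF : ∀ s, LRel w (Finsupp.single s (e s)) (F s) := by
    rintro (((i | p) | u) | j)
    · exact hX _
    · have h1 : lin (fun i => L i p.1) = X (Sum.inl (Sum.inl (Sum.inr p))) := by
        rw [← hlinb, hb]; rfl
      simp only [F, e, ff, h1]
      unfold LRel
      rw [X_pow_eq_monomial, add_sub_cancel_right, Finsupp.weight_single]
      apply hXW
      simp only [w, p.2, if_true, smul_eq_mul]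
      omega
    · exact hX _
    · by_cases hj : Piv W j
      · simp only [F, e, hj, if_true]
        unfold LRel
        rw [Finsupp.weight_single]
        have h1 : linx (r j) = ∑ t, r j t • (X (Sum.inr t) : MvPolynomial ((({i // ¬ c i} ⊕ {p // Piv W p}) ⊕ ι') ⊕ Fin k) K) := by
          simp only [linx, Module.Basis.constr_apply_fintype]
          rfl
        obtain ⟨-, hr1, hr2⟩ := hr j hj
        rw [h1, ← Finset.add_sum_erase _ _ (Finset.mem_univ j), hr1,
          one_smul K (X (Sum.inr j) : MvPolynomial _ K)]
        have : (X (Sum.inr j) : MvPolynomial ((({i // ¬ c i} ⊕ {p // Piv W p}) ⊕ ι') ⊕ Fin k) K) =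
          monomial (Finsupp.single (Sum.inr j) 1) 1 := rfl
        rw [← this, add_sub_cancel_left]
        refine Submodule.sum_mem _ fun t ht => ?_
        rcases lt_or_gt_of_ne (Finset.ne_of_mem_erase ht) with h | h
        · refine Submodule.smul_mem _ _ (hXW _ _ ?_)
          have := Fin.lt_def.mp h
          simp only [w, hj, if_true, smul_eq_mul]
          split_ifs <;> omega
        · rw [hr2 t h, zero_smul]; exact Submodule.zero_mem _
      · simp only [F, e, hj, if_false, ff]
        unfold LRel
        rw [Finsupp.weight_single]
        have : (X (Sum.inr j) : MvPolynomial ((({i // ¬ c i} ⊕ {p // Piv W p}) ⊕ ι') ⊕ Fin k) K) =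
          monomial (Finsupp.single (Sum.inr j) 1) 1 := rfl
        rw [← this, add_sub_cancel_left]
        refine WF_mono w ?_ (WF_pow w _ (hlinW _) _)
        simp only [w, hj, if_false, smul_eq_mul]
        omega
  let l1 : List ((({i // ¬ c i} ⊕ {p // Piv W p}) ⊕ ι') ⊕ Fin k) :=
    (Finset.univ : Finset {i // ¬ c i}).toList.map fun i => Sum.inl (Sum.inl (Sum.inl i))
  let l2 : List ((({i // ¬ c i} ⊕ {p // Piv W p}) ⊕ ι') ⊕ Fin k) :=
    (Finset.univ : Finset {p // Piv W p}).toList.map fun p => Sum.inr p.1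
  let h3 : Fin k → (({i // ¬ c i} ⊕ {p // Piv W p}) ⊕ ι') ⊕ Fin k := fun j =>
    if h : Piv W j then Sum.inl (Sum.inl (Sum.inr ⟨j, h⟩)) else Sum.inr j
  have hh3 : ∀ j, ψ (F (h3 j)) = fseq L j := by
    intro j
    rw [← hff]
    by_cases h : Piv W j <;> simp [h3, F, h]
  have hnd : ((l1 ++ l2) ++ (List.finRange k).map h3).Nodup := by
    refine List.Nodup.append (List.Nodup.append ?_ ?_ ?_) ?_ ?_
    · refine List.Nodup.map ?_ (Finset.nodup_toList _)
      intro a b hab; simpa using hab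
    · refine List.Nodup.map ?_ (Finset.nodup_toList _)
      intro a b hab; exact Subtype.ext (by simpa using hab)
    · intro a ha hb'
      simp only [l1, l2, List.mem_map] at ha hb'
      obtain ⟨i, _, rfl⟩ := ha
      obtain ⟨p, _, hp⟩ := hb'
      simp at hp
    · refine List.Nodup.map ?_ (List.nodup_finRange k)
      intro a b hab
      by_cases ha : Piv W a <;> by_cases hb' : Piv W b <;> simpa [h3, ha, hb'] using hab
    · intro a ha hb'
      simp only [List.mem_map, List.mem_append, l1, l2] at ha hb'
      obtain ⟨j, _, rfl⟩ := hb'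
      rcases ha with ⟨i, _, hi⟩ | ⟨p, _, hp⟩
      · by_cases h : Piv W j <;> simp [h3, h] at hi
      · by_cases h : Piv W j
        · simp [h3, h] at hp
        · simp only [h3, h, dif_neg, not_false_iff, Sum.inr.injEq] at hp
          exact h (hp ▸ p.2)
  have hreg := leading_weaklyRegular w e he F hF _ hnd
  have hreg2 : IsWeaklyRegular (MvPolynomial (Fin n) (MvPolynomial (Fin k) K))
      ((((l1 ++ l2) ++ (List.finRange k).map h3).map F).map ψ) := by
    refine (AddEquiv.isWeaklyRegular_congr (e := ψ.toRingEquiv.toAddEquiv) ?_).mp hreg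
    rw [List.forall₂_map_right_iff, List.forall₂_same]
    intro s _ x
    exact map_mul ψ s x
  rw [List.map_append, List.map_append, isWeaklyRegular_append_iff] at hreg2
  have hlast : List.map ψ (List.map F ((List.finRange k).map h3)) =
      (List.finRange k).map (fseq L) := by
    rw [List.map_map, List.map_map]
    exact List.map_congr_left fun j _ => hh3 j
  rw [hlast] at hreg2
  refine ((Submodule.quotEquivOfEq _ _ ?_).isWeaklyRegular_congr _).mp hreg2.2
  rw [smul_eq_mul, Ideal.mul_top]
  have hXi : ∀ i : {i // ¬ c i}, ψ (X (Sum.inl (Sum.inl (Sum.inl i)))) = X i.1 := by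
    intro i
    rw [← hlinb, hψ2, hb, Sum.elim_inl, ly]
    have := (Pi.basisFun K (Fin n)).constr_basis K
      (fun j => (X j : MvPolynomial (Fin n) (MvPolynomial (Fin k) K))) i.1
    simpa using this
  have hset : ∀ x, x ∈ List.map ψ (List.map F (l1 ++ l2)) ↔
      (∃ i, ¬ c i ∧ X i = x) ∨ (∃ p, Piv W p ∧ lx K k n (r p) = x) := by
    intro x
    simp only [List.map_append, List.mem_append, List.map_map, List.mem_map, l1, l2,
      Finset.mem_toList, Finset.mem_univ, true_and, Function.comp, F, hXi]
    refine or_congr ?_ ?_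
    · simp
    · constructor
      · rintro ⟨p, hp⟩
        rw [if_pos p.2, hlinx] at hp
        exact ⟨p.1, p.2, hp⟩
      · rintro ⟨p, h, hp⟩
        exact ⟨⟨p, h⟩, by rw [if_pos h, hlinx]; exact hp⟩
  apply le_antisymm
  · unfold Ideal.ofList
    rw [Ideal.span_le]
    intro x hx
    rcases (hset x).mp hx with ⟨i, hi, rfl⟩ | ⟨p, hp, rfl⟩
    · exact Ideal.subset_span ⟨i, by simp [hi]⟩
    · have : W ≤ Submodule.comap (lx K k n) (Submodule.restrictScalars K
        (Ideal.span (Set.range fun i => if c i then lx K k n (L i) else X i))) := by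
        rw [hW, Submodule.span_le]
        rintro _ ⟨i, hi, rfl⟩
        refine Ideal.subset_span ⟨i, ?_⟩
        have hi : c i := hi
        simp [hi]
      exact this (hr p hp).1
  · rw [Ideal.span_le]
    rintro _ ⟨i, rfl⟩
    by_cases hi : c i
    · simp only [hi, if_true]
      refine piv_span W (Submodule.comap (lx K k n) (Submodule.restrictScalars K
        (Ideal.ofList (List.map ψ (List.map F (l1 ++ l2)))))) r hr ?_ ?_
      · intro p hp
        exact Ideal.subset_span ((hset _).mpr (Or.inr ⟨p, hp, rfl⟩))
      · rw [hW]; exact Submodule.subset_span ⟨i, hi, rfl⟩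
    · simp only [hi, if_false]
      exact Ideal.subset_span ((hset _).mpr (Or.inl ⟨i, hi, rfl⟩))

lemma all_cases {K : Type*} [Field K] {k n : ℕ} (L : Fin n → Fin k → K) (U : Finset (Fin n)) :
    ∀ c : Fin n → Bool,
    IsWeaklyRegular (MvPolynomial (Fin n) (MvPolynomial (Fin k) K) ⧸
      Ideal.span (Set.range fun i => if i ∈ U then lx K k n (L i) * X i else
        if c i then lx K k n (L i) else X i))
      ((List.finRange k).map (fseq L)) := by
  classical
  induction U using Finset.induction_on with
  | empty =>
    intro c
    have h0 : (fun i => if i ∈ (∅ : Finset (Fin n)) then lx K k n (L i) * X i else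
        if c i then lx K k n (L i) else X i) =
        fun i => if c i = true then lx K k n (L i) else X i := by
      funext i; simp
    rw [h0]
    exact base_case L (fun i => c i = true)
  | insert i U hi ih =>
    intro c
    let G : (Fin n → Bool) → Fin n → MvPolynomial (Fin n) (MvPolynomial (Fin k) K) := fun c j =>
      if j ∈ U then lx K k n (L j) * X j else if c j then lx K k n (L j) else X j
    let s := G c '' {j | j ≠ i}
    have hsplit : ∀ g : Fin n → MvPolynomial (Fin n) (MvPolynomial (Fin k) K),
        (∀ j, j ≠ i → g j = G c j) →
        Ideal.span (Set.range g) = Ideal.span s ⊔ Ideal.span {g i} := by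
      intro g hg
      rw [← Ideal.span_union]
      congr 1
      ext x
      constructor
      · rintro ⟨j, rfl⟩
        by_cases hj : j = i
        · subst hj; right; rfl
        · left; exact ⟨j, hj, (hg j hj).symm⟩
      · rintro (⟨j, hj, rfl⟩ | hx)
        · exact ⟨j, hg j hj⟩
        · exact ⟨i, hx.symm⟩
    have e2 := hsplit (fun j => if j ∈ insert i U then lx K k n (L j) * X j else
        if c j then lx K k n (L j) else X j) (fun j hj => by simp [G, hj])
    have e1 := hsplit (G (Function.update c i true)) (fun j hj => by simp [G, hj])
    have e3 := hsplit (G (Function.update c i false)) (fun j hj => by simp [G, hj])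
    have g1 : G (Function.update c i true) i = lx K k n (L i) := by simp [G, hi]
    have g3 : G (Function.update c i false) i = X i := by simp [G, hi]
    have h1 := ih (Function.update c i true)
    have h3 := ih (Function.update c i false)
    change IsWeaklyRegular (_ ⧸ Ideal.span (Set.range (G (Function.update c i true)))) _ at h1
    change IsWeaklyRegular (_ ⧸ Ideal.span (Set.range (G (Function.update c i false)))) _ at h3
    rw [e1, g1] at h1
    rw [e3, g3] at h3
    rw [e2, if_pos (Finset.mem_insert_self i U)]
    refine quot_mul_weaklyRegular _ _ _ _ ?_ h1 h3
    refine X_nzd i s ?_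
    have hlx : ∀ v, ∃ q, lx K k n v = C q := by
      intro v
      refine ⟨∑ j, v j • X j, ?_⟩
      rw [lx, Module.Basis.constr_apply_fintype, map_sum]
      refine Finset.sum_congr rfl fun j _ => ?_
      rw [smul_eq_C_mul, map_mul, Algebra.smul_def]
      rfl
    rintro _ ⟨j, hj, rfl⟩
    obtain ⟨q, hq⟩ := hlx (L j)
    have hj : j ≠ i := hj
    simp only [G, hq]
    split_ifs <;> simp [hj]

end Base

/-- **Garrousian–Simis–Tohaneanu, Lemma 4.7**: for nonzero linear forms `ℓ_1, …, ℓ_n` in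
`K[x_1,…,x_k]` (repetitions and proportional forms allowed), the quotient
`T/⟨ℓ_1 y_1, …, ℓ_n y_n⟩` of `T = K[x_1,…,x_k,y_1,…,y_n]` has depth at least `k` with respect
to the graded maximal ideal: there is a regular sequence of length `k` on the quotient
consisting of elements of `⟨x_1,…,x_k,y_1,…,y_n⟩`. -/
theorem depth_of_monomial_like_quotient
    {K : Type*} [Field K] {k n : ℕ}
    (ℓ : Fin n → MvPolynomial (Fin k) K)
    (hhom : ∀ i, (ℓ i).IsHomogeneous 1)
    (hne : ∀ i, ℓ i ≠ 0)
    (J : Ideal (MvPolynomial (Fin n) (MvPolynomial (Fin k) K)))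
    (hJ : J = Ideal.span (Set.range fun i : Fin n => C (ℓ i) * X i))
    (mx : Ideal (MvPolynomial (Fin n) (MvPolynomial (Fin k) K)))
    (hmx : mx = Ideal.span
      ((Set.range fun j : Fin k => (C (X j) : MvPolynomial (Fin n) (MvPolynomial (Fin k) K))) ∪
        Set.range (X : Fin n → MvPolynomial (Fin n) (MvPolynomial (Fin k) K)))) :
    ∃ rs : List (MvPolynomial (Fin n) (MvPolynomial (Fin k) K)),
      rs.length = k ∧ (∀ r ∈ rs, r ∈ mx) ∧
      RingTheory.Sequence.IsRegular
        (MvPolynomial (Fin n) (MvPolynomial (Fin k) K) ⧸ J) rs := by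
  classical
  let L : Fin n → Fin k → K := fun i j => coeff (Finsupp.single j 1) (ℓ i)
  have hL : ∀ i, C (ℓ i) = lx K k n (L i) := by
    intro i
    have h1 : ℓ i = ∑ j, L i j • X j := by
      ext d
      rw [coeff_sum]
      simp only [coeff_smul, smul_eq_mul, coeff_X]
      by_cases hd : d.degree = 1
      · have hdj : ∃ j, d = Finsupp.single j 1 := by
          have hd0 : d ≠ 0 := by rintro rfl; simp at hd
          obtain ⟨j, hj⟩ := Finsupp.ne_iff.mp hd0
          have hle : Finsupp.single j 1 ≤ d := by
            rw [Finsupp.single_le_iff]; exact Nat.one_le_iff_ne_zero.mpr hj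
          have h2 := tsub_add_cancel_of_le hle
          have h3 := congrArg Finsupp.degree h2
          rw [map_add, hd, Finsupp.degree_single] at h3
          have h4 := (Finsupp.degree_eq_zero_iff _).mp (by omega : Finsupp.degree (d - Finsupp.single j 1) = 0)
          exact ⟨j, by rw [← h2, h4, zero_add]⟩
        obtain ⟨j, rfl⟩ := hdj
        rw [Finset.sum_eq_single j]
        · simp [L]
        · intro t _ ht
          rw [if_neg, mul_zero]
          intro h
          exact ht (Finsupp.single_left_injective one_ne_zero h)
        · simp
      · rw [(hhom i).coeff_eq_zero hd, Finset.sum_eq_zero]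
        intro j _
        rw [if_neg, mul_zero]
        rintro rfl
        simp at hd
    conv_lhs => rw [h1]
    rw [lx, Module.Basis.constr_apply_fintype, map_sum]
    refine Finset.sum_congr rfl fun j _ => ?_
    rw [smul_eq_C_mul, map_mul, Algebra.smul_def]
    rfl
  have hXm : ∀ i : Fin n, (X i : MvPolynomial (Fin n) (MvPolynomial (Fin k) K)) ∈ mx := by
    intro i; rw [hmx]; exact Ideal.subset_span (Or.inr ⟨i, rfl⟩)
  have hmem : ∀ r ∈ (List.finRange k).map (fseq L), r ∈ mx := by
    intro r hr
    obtain ⟨j, _, rfl⟩ := List.mem_map.mp hr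
    refine mx.add_mem ?_ (Ideal.pow_mem_of_mem _ ?_ _ (by omega))
    · rw [hmx]; exact Ideal.subset_span (Or.inl ⟨j, rfl⟩)
    · exact constr_mem (Pi.basisFun K (Fin n)) _ (mx.restrictScalars K) hXm _
  have hJm : J ≤ mx := by
    rw [hJ, Ideal.span_le]
    rintro _ ⟨i, rfl⟩
    exact mx.mul_mem_left _ (hXm i)
  have hmtop : mx ≠ ⊤ := by
    let ev : MvPolynomial (Fin n) (MvPolynomial (Fin k) K) →+* K :=
      (eval (0 : Fin k → K)).comp (eval (0 : Fin n → MvPolynomial (Fin k) K))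
    have : mx ≤ RingHom.ker ev := by
      rw [hmx, Ideal.span_le]
      rintro _ (⟨j, rfl⟩ | ⟨i, rfl⟩) <;> simp [ev, RingHom.mem_ker]
    intro h
    have h1 : (1 : MvPolynomial (Fin n) (MvPolynomial (Fin k) K)) ∈ RingHom.ker ev :=
      this (h ▸ Submodule.mem_top)
    rw [RingHom.mem_ker, map_one] at h1
    exact one_ne_zero h1
  refine ⟨(List.finRange k).map (fseq L), by simp, hmem, ?_, ?_⟩
  · have := all_cases L Finset.univ (fun _ => true)
    have hJ' : J = Ideal.span (Set.range fun i => if i ∈ (Finset.univ : Finset (Fin n)) then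
        lx K k n (L i) * X i else
        if (fun _ => true : Fin n → Bool) i then lx K k n (L i) else X i) := by
      rw [hJ]; simp [hL]
    rw [hJ']
    exact this
  · intro h
    apply hmtop
    rw [Ideal.eq_top_iff_one]
    have h1 : (Submodule.Quotient.mk 1 : MvPolynomial (Fin n) (MvPolynomial (Fin k) K) ⧸ J) ∈
        (⊤ : Submodule (MvPolynomial (Fin n) (MvPolynomial (Fin k) K)) _) := Submodule.mem_top
    rw [h] at h1
    have h2 : (Ideal.ofList ((List.finRange k).map (fseq L)) •
        (⊤ : Submodule (MvPolynomial (Fin n) (MvPolynomial (Fin k) K))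
          (MvPolynomial (Fin n) (MvPolynomial (Fin k) K) ⧸ J))) ≤ Submodule.map J.mkQ mx := by
      rw [Submodule.smul_le]
      intro r hr x _
      obtain ⟨x, rfl⟩ := Submodule.mkQ_surjective _ x
      refine ⟨r * x, mx.mul_mem_right _ ?_, by rw [← smul_eq_mul, map_smul]⟩
      exact (Ideal.span_le.mpr hmem) hr
    obtain ⟨y, hy, hy1⟩ := h2 h1
    have h3 := (Submodule.Quotient.eq J).mp hy1
    have := mx.sub_mem hy (hJm h3)
    simpa using this
end

section
/- The symmetric algebra S(I) ≅ T/I_1(A,n−1) of the ideal I = I_{n−1}(A) of (n−1)-fold products has depth exactly k+1 with respect to the graded maximal ideal ⟨x_1,...,x_k,y_1,...,y_n⟩ of T: the maximal length of a regular sequence on T/I_1(A,n−1) consisting of elements of ⟨x_1,...,x_k,y_1,...,y_n⟩ is k+1 (equivalently, the projective dimension of T/I_1(A,n−1) over T is n−1). -/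
set_option synthInstance.maxHeartbeats 1000000
set_option maxHeartbeats 1000000

open MvPolynomial Finset

namespace DepthSym

open CategoryTheory Abelian Limits

universe u

/-- vanishing of `Ext` below degree `d` -/
def DP {T : Type u} [CommRing T] (mx : Ideal T) (d : ℕ) (J : Ideal T) : Prop :=
  ∀ i < d, Subsingleton (Ext.{u} (ModuleCat.of T (T ⧸ mx)) (ModuleCat.of T (T ⧸ J)) i)

lemma DP.mono {T : Type u} [CommRing T] {mx : Ideal T} {d e : ℕ} {J : Ideal T}
    (h : DP mx d J) (hde : e ≤ d) : DP mx e J := fun i hi => h i (lt_of_lt_of_le hi hde)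

section ses
variable {T : Type u} [CommRing T] {J Jc : Ideal T} {a : T}

/-- multiplication by `a` from `T/(J:a)` to `T/J` -/
noncomputable def mulA (hc : ∀ f, f ∈ Jc ↔ a * f ∈ J) : (T ⧸ Jc) →ₗ[T] (T ⧸ J) :=
  Submodule.mapQ Jc J (LinearMap.lsmul T T a) (by
    intro f hf
    simpa using (hc f).1 hf)

/-- the projection -/
noncomputable def prA (J : Ideal T) (a : T) : (T ⧸ J) →ₗ[T] (T ⧸ (J ⊔ Ideal.span {a})) :=
  Submodule.factor le_sup_left

lemma mulA_inj (hc : ∀ f, f ∈ Jc ↔ a * f ∈ J) : Function.Injective (mulA hc) := by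
  rw [← LinearMap.ker_eq_bot, LinearMap.ker_eq_bot']
  intro m hm
  obtain ⟨f, rfl⟩ := Submodule.Quotient.mk_surjective _ m
  rw [mulA, Submodule.mapQ_apply, Submodule.Quotient.mk_eq_zero] at hm
  rw [Submodule.Quotient.mk_eq_zero]
  exact (hc f).2 (by simpa using hm)

lemma prA_surj : Function.Surjective (prA J a) := by
  intro m
  obtain ⟨f, rfl⟩ := Submodule.Quotient.mk_surjective _ m
  exact ⟨Submodule.Quotient.mk f, by simp [prA]⟩

lemma mulA_prA (hc : ∀ f, f ∈ Jc ↔ a * f ∈ J) : Function.Exact (mulA hc) (prA J a) := by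
  intro m
  obtain ⟨f, rfl⟩ := Submodule.Quotient.mk_surjective _ m
  constructor
  · intro h
    have h' : f ∈ J ⊔ Ideal.span {a} := by
      rw [← Submodule.Quotient.mk_eq_zero]
      simpa [prA] using h
    obtain ⟨j, hj, b, hb, rfl⟩ := Submodule.mem_sup.1 h'
    obtain ⟨c, rfl⟩ := Ideal.mem_span_singleton'.1 hb
    refine ⟨Submodule.Quotient.mk c, ?_⟩
    rw [mulA, Submodule.mapQ_apply]
    symm
    rw [Submodule.Quotient.eq]
    simpa [mul_comm] using hj
  · rintro ⟨c, hcc⟩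
    obtain ⟨c, rfl⟩ := Submodule.Quotient.mk_surjective _ c
    rw [← hcc, mulA, Submodule.mapQ_apply]
    have : (prA J a) (Submodule.Quotient.mk ((LinearMap.lsmul T T a) c)) =
      Submodule.Quotient.mk ((LinearMap.lsmul T T a) c) := by simp [prA]
    rw [this, Submodule.Quotient.mk_eq_zero]
    apply Submodule.mem_sup_right
    simpa using Ideal.mul_mem_right c _ (Ideal.mem_span_singleton_self a)

/-- the short complex -/
noncomputable def sc (hc : ∀ f, f ∈ Jc ↔ a * f ∈ J) : ShortComplex (ModuleCat.{u} T) :=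
  ShortComplex.mk (ModuleCat.ofHom (mulA hc)) (ModuleCat.ofHom (prA J a)) (by
    rw [← ModuleCat.ofHom_comp, (mulA_prA hc).linearMap_comp_eq_zero]; rfl)

lemma sc_exact (hc : ∀ f, f ∈ Jc ↔ a * f ∈ J) : (sc hc).ShortExact where
  exact := (ShortComplex.ShortExact.moduleCat_exact_iff_function_exact _).2 (mulA_prA hc)
  mono_f := (ModuleCat.mono_iff_injective _).2 (mulA_inj hc)
  epi_g := (ModuleCat.epi_iff_surjective _).2 prA_surj

lemma DP_colon {mx : Ideal T} {d : ℕ} (hc : ∀ f, f ∈ Jc ↔ a * f ∈ J) (h1 : DP mx (d + 1) J)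
    (h2 : DP mx d (J ⊔ Ideal.span {a})) : DP mx (d + 1) Jc := by
  intro i hi
  have h1i := h1 i hi
  rcases i with _ | i
  · have := Ext.postcomp_mk₀_injective_of_mono (ModuleCat.of T (T ⧸ mx)) (sc hc).f
      (hf := (sc_exact hc).mono_f)
    exact @Function.Injective.subsingleton _ _ _ this h1i
  · have h2i := h2 i (by omega)
    refine ⟨fun x y => ?_⟩
    have key : ∀ x : Ext.{u} (ModuleCat.of T (T ⧸ mx)) (sc hc).X₁ (i + 1), x = 0 := by
      intro x
      obtain ⟨z, hz⟩ := Ext.covariant_sequence_exact₁ _ (sc_exact hc) x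
        (@Subsingleton.elim _ h1i _ _) (n₀ := i) rfl
      have : z = 0 := @Subsingleton.elim _ h2i _ _
      rw [← hz, this, Ext.zero_comp]
    exact (key x).trans (key y).symm

lemma DP_sup {mx : Ideal T} {d : ℕ} (hc : ∀ f, f ∈ Jc ↔ a * f ∈ J) (h1 : DP mx (d + 1) Jc)
    (h2 : DP mx d J) : DP mx d (J ⊔ Ideal.span {a}) := by
  intro i hi
  have h1i := h1 (i + 1) (by omega)
  have h2i := h2 i hi
  have key : ∀ x : Ext.{u} (ModuleCat.of T (T ⧸ mx)) (sc hc).X₃ i, x = 0 := by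
    intro x
    obtain ⟨z, hz⟩ := Ext.covariant_sequence_exact₃ _ (sc_exact hc) x (n₁ := i + 1) rfl
        (@Subsingleton.elim _ h1i _ _)
    have : z = 0 := @Subsingleton.elim _ h2i _ _
    rw [← hz, this, Ext.zero_comp]
  exact ⟨fun x y => (key x).trans (key y).symm⟩

lemma DP_replace {mx : Ideal T} {d : ℕ} {a b : T} (hab : ∀ f, a * f ∈ J ↔ b * f ∈ J)
    (h1 : DP mx (d + 1) J) (h2 : DP mx d (J ⊔ Ideal.span {a})) :
    DP mx d (J ⊔ Ideal.span {b}) := by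
  let Jc : Ideal T := LinearMap.ker ((Submodule.mkQ J).comp (LinearMap.lsmul T T a))
  have hc : ∀ f, f ∈ Jc ↔ a * f ∈ J := by
    intro f
    rw [← Ideal.Quotient.eq_zero_iff_mem (I := J), map_mul]
    simp [Jc]
  have hc' : ∀ f, f ∈ Jc ↔ b * f ∈ J := fun f => (hc f).trans (hab f)
  exact DP_sup hc' (DP_colon hc h1 h2) (h1.mono (Nat.le_succ d))

lemma DP_regular {mx : Ideal T} {d : ℕ} (ha : a ∈ mx) (hreg : ∀ f, a * f ∈ J → f ∈ J)
    (h : DP mx d (J ⊔ Ideal.span {a})) : DP mx (d + 1) J := by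
  have hc : ∀ f, f ∈ J ↔ a * f ∈ J := fun f => ⟨fun hf => J.mul_mem_left a hf, hreg f⟩
  have hf : (sc hc).f = a • 𝟙 (ModuleCat.of T (T ⧸ J)) := by
    ext m
    obtain ⟨f, rfl⟩ := Submodule.Quotient.mk_surjective _ m
    rfl
  have hann : a ∈ Module.annihilator T (ModuleCat.of T (T ⧸ mx)) := by
    change a ∈ Module.annihilator T (T ⧸ mx)
    rwa [Ideal.annihilator_quotient]
  have hz : ∀ (i : ℕ) (x : Ext.{u} (ModuleCat.of T (T ⧸ mx)) (ModuleCat.of T (T ⧸ J)) i),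
      x.comp (Ext.mk₀ (sc hc).f) (add_zero i) = 0 := by
    intro i x
    rw [hf]
    have := Ext.postcomp_smul_id_eq_zero_of_mem_annihilator
      (M := ModuleCat.of T (T ⧸ J)) hann i
    exact congrArg (fun g => g.hom x) this
  intro i hi
  rcases i with _ | i
  · have inj := Ext.postcomp_mk₀_injective_of_mono (ModuleCat.of T (T ⧸ mx)) (sc hc).f
      (hf := (sc_exact hc).mono_f)
    refine ⟨fun x y => inj ?_⟩
    exact (hz 0 x).trans (hz 0 y).symm
  · have h2i := h i (by omega)
    have key : ∀ x : Ext.{u} (ModuleCat.of T (T ⧸ mx)) (sc hc).X₁ (i + 1), x = 0 := by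
      intro x
      obtain ⟨z, hz⟩ := Ext.covariant_sequence_exact₁ _ (sc_exact hc) x
        (hz _ x) (n₀ := i) rfl
      have : z = 0 := @Subsingleton.elim _ h2i _ _
      rw [← hz, this, Ext.zero_comp]
    exact ⟨fun x y => (key x).trans (key y).symm⟩

lemma DP_exists_regular [IsNoetherianRing T] {mx : Ideal T} {d : ℕ} (hJ : J ≤ mx) (hmx : mx ≠ ⊤)
    (h : DP mx d J) : ∃ rs : List T, rs.length = d ∧ (∀ r ∈ rs, r ∈ mx) ∧
      RingTheory.Sequence.IsRegular (T ⧸ J) rs := by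
  refine ModuleCat.exists_isRegular_of_exists_subsingleton_ext mx d (ModuleCat.of T (T ⧸ J)) ?_
    (ModuleCat.of T (T ⧸ mx)) ?_ h
  · rw [lt_top_iff_ne_top]
    intro htop
    apply hmx
    rw [Ideal.eq_top_iff_one]
    have h1 : (Submodule.Quotient.mk 1 : T ⧸ J) ∈ (mx • (⊤ : Submodule T (T ⧸ J))) := by
      have : (mx • (⊤ : Submodule T (T ⧸ J))) = ⊤ := htop
      rw [this]; trivial
    have h2 : (mx • (⊤ : Submodule T (T ⧸ J))) ≤ Submodule.map (Submodule.mkQ J) mx := by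
      rw [Submodule.smul_le]
      intro r hr m _
      obtain ⟨f, rfl⟩ := Submodule.Quotient.mk_surjective _ m
      exact ⟨r * f, mx.mul_mem_right f hr, rfl⟩
    obtain ⟨f, hf, hf1⟩ := h2 h1
    have : f - 1 ∈ J := (Submodule.Quotient.eq J).1 hf1
    have := mx.sub_mem hf (hJ this)
    simpa using this
  · change Module.support T (T ⧸ mx) = _
    rw [Module.support_eq_zeroLocus, Ideal.annihilator_quotient]

end ses

end DepthSym

namespace DepthSym

section poly
open Polynomial
variable {A : Type*} [CommRing A] {s l : A}

lemma coeff_g (F : A[X]) (i : ℕ) :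
    ((Polynomial.C s - Polynomial.C l * Polynomial.X) * F).coeff (i + 1) =
      s * F.coeff (i + 1) - l * F.coeff i := by
  rw [sub_mul, Polynomial.coeff_sub, Polynomial.coeff_C_mul, mul_assoc, Polynomial.coeff_C_mul,
    Polynomial.coeff_X_mul]

lemma coeff_g_zero (F : A[X]) :
    ((Polynomial.C s - Polynomial.C l * Polynomial.X) * F).coeff 0 = s * F.coeff 0 := by
  rw [sub_mul, Polynomial.coeff_sub, Polynomial.coeff_C_mul, mul_assoc, Polynomial.coeff_C_mul,
    Polynomial.coeff_X_mul_zero, mul_zero, sub_zero]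

/-- downward vanishing -/
lemma down (h1 : ∀ a, l * a = 0 → s * a = 0) (B : A[X]) (d : ℕ)
    (h : ∀ i, d ≤ i → ((Polynomial.C s - Polynomial.C l * Polynomial.X) * B).coeff (i + 1) = 0) :
    ∀ i, d ≤ i → l * B.coeff i = 0 := by
  have key : ∀ m i, d ≤ i → B.natDegree < i + m → l * B.coeff i = 0 := by
    intro m
    induction m with
    | zero =>
      intro i _ hi
      rw [Polynomial.coeff_eq_zero_of_natDegree_lt (by omega), mul_zero]
    | succ m ih =>
      intro i hdi hi
      have h2 := h1 _ (ih (i + 1) (by omega) (by omega))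
      have h3 := h i hdi
      rw [coeff_g, h2, zero_sub, neg_eq_zero] at h3
      exact h3
  intro i hi
  exact key (B.natDegree + 1) i hi (by omega)

lemma ann_g (h1 : ∀ a, l * a = 0 → s * a = 0) (F : A[X]) :
    Polynomial.C l * F = 0 ↔ (Polynomial.C s - Polynomial.C l * Polynomial.X) * F = 0 := by
  constructor
  · intro h
    have h' : Polynomial.C s * F = 0 := by
      ext i
      rw [Polynomial.coeff_C_mul, Polynomial.coeff_zero]
      apply h1
      rw [← Polynomial.coeff_C_mul, h, Polynomial.coeff_zero]
    rw [sub_mul, h', mul_right_comm, h, zero_mul, sub_zero]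
  · intro h
    ext i
    rw [Polynomial.coeff_C_mul, Polynomial.coeff_zero]
    exact down h1 F 0 (fun i _ => by rw [h, Polynomial.coeff_zero]) i (Nat.zero_le _)

lemma poly_main (P : Submonoid A) (hs : s ∈ P) (h1 : ∀ a, l * a = 0 → s * a = 0)
    (h2 : ∀ p ∈ P, ∀ a, p * a = 0 → s * a = 0)
    (h3 : ∀ p ∈ P, ∀ a, l ∣ p * a → l ∣ s * a) (d : ℕ) :
    ∀ p ∈ P, ∀ F : A[X], F.natDegree ≤ d →
      (Polynomial.C s - Polynomial.C l * Polynomial.X) ∣ Polynomial.C p * F →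
      (Polynomial.C s - Polynomial.C l * Polynomial.X) ∣ Polynomial.C s * F := by
  induction d with
  | zero =>
    rintro p hp F hF ⟨B, hB⟩
    rw [Polynomial.eq_C_of_natDegree_le_zero hF] at hB ⊢
    have hl := down h1 B 0 (fun i _ => by rw [← hB]; simp)
    have h0 : p * F.coeff 0 = 0 := by
      have := congrArg (fun G => Polynomial.coeff G 0) hB
      simp only [coeff_g_zero, Polynomial.coeff_C_mul, Polynomial.coeff_C_zero] at this
      rw [this]
      exact h1 _ (hl 0 le_rfl)
    rw [← Polynomial.C_mul, h2 p hp _ h0]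
    simp
  | succ d ih =>
    rintro p hp F hF ⟨B, hB⟩
    have hl := down h1 B (d + 1) (fun i hi => by
      rw [← hB, Polynomial.coeff_C_mul, Polynomial.coeff_eq_zero_of_natDegree_lt (by omega),
        mul_zero])
    have hd : l ∣ p * F.coeff (d + 1) := by
      have := congrArg (fun G => Polynomial.coeff G (d + 1)) hB
      simp only [coeff_g, Polynomial.coeff_C_mul] at this
      rw [this, h1 _ (hl _ le_rfl), zero_sub]
      exact (dvd_mul_right _ _).neg_right
    obtain ⟨v, hv⟩ := h3 p hp _ hd
    set u := F.coeff (d + 1) with hu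
    set F' : A[X] := F - Polynomial.C u * Polynomial.X ^ (d + 1) +
      Polynomial.C v * Polynomial.X ^ d with hF'
    have hdiff : Polynomial.C s * F - Polynomial.C s * F' =
        (Polynomial.C s - Polynomial.C l * Polynomial.X) * (- Polynomial.C v * Polynomial.X ^ d) := by
      have : (Polynomial.C s : A[X]) * Polynomial.C u = Polynomial.C l * Polynomial.C v := by
        rw [← Polynomial.C_mul, ← Polynomial.C_mul, hv]
      rw [hF']
      linear_combination Polynomial.X ^ (d + 1) * this
    have hdeg : F'.natDegree ≤ d := by
      rw [Polynomial.natDegree_le_iff_coeff_eq_zero]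
      intro N hN
      rw [hF']
      simp only [Polynomial.coeff_add, Polynomial.coeff_sub, Polynomial.coeff_C_mul,
        Polynomial.coeff_X_pow]
      rw [if_neg (show ¬ N = d by omega)]
      by_cases h : N = d + 1
      · rw [if_pos h, h, ← hu]; ring
      · rw [if_neg h, Polynomial.coeff_eq_zero_of_natDegree_lt (by omega)]; ring
    have hF's : Polynomial.C s * F' = Polynomial.C s * F -
        (Polynomial.C s - Polynomial.C l * Polynomial.X) *
          (- Polynomial.C v * Polynomial.X ^ d) := by
      rw [← hdiff]; ring
    have := ih (p * s) (P.mul_mem hp hs) F' hdeg (by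
      rw [Polynomial.C_mul, mul_assoc, hF's, mul_sub]
      refine dvd_sub ?_ ?_
      · rw [mul_left_comm, hB]
        exact (dvd_mul_right _ _).mul_left _
      · exact (dvd_mul_right _ _).mul_left _)
    have h5 : Polynomial.C s * F = Polynomial.C s * F' +
        (Polynomial.C s - Polynomial.C l * Polynomial.X) *
          (- Polynomial.C v * Polynomial.X ^ d) := by
      rw [← hdiff]; ring
    rw [h5]
    exact dvd_add this (dvd_mul_right _ _)

end poly

section ass
variable {T : Type*} [CommRing T] [IsNoetherianRing T]

open Pointwise in
lemma ass_step {M : Type*} [AddCommGroup M] [Module T M] [Module.Finite T M]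
    (m q : Ideal T) [hm : m.IsPrime] [hq : q.IsPrime] (hqm : q ≤ m) (z : M)
    (hz : ∀ r : T, r • z = 0 ↔ r ∈ q) (a : T) (ham : a ∈ m) (hreg : IsSMulRegular M a) :
    ∃ q' : Ideal T, q'.IsPrime ∧ q' ≤ m ∧ q < q' ∧
      ∃ z' : QuotSMulTop a M, ∀ r : T, r • z' = 0 ↔ r ∈ q' := by
  classical
  -- the submodule killed by q
  let N : Submodule T M :=
    { carrier := {w | ∀ r ∈ q, r • w = 0}
      add_mem' := fun {x y} hx hy r hr => by rw [smul_add, hx r hr, hy r hr, add_zero]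
      zero_mem' := fun r _ => smul_zero r
      smul_mem' := fun c x hx r hr => by rw [smul_comm, hx r hr, smul_zero] }
  have hzN : z ∈ N := fun r hr => (hz r).2 hr
  have : ∃ w ∈ N, ∀ t : T, t • w ∈ a • (⊤ : Submodule T M) → t ∈ m := by
    by_contra! hcon
    have hfg : N.FG := IsNoetherian.noetherian N
    obtain ⟨G, hG⟩ := hfg
    have hGN : ∀ g ∈ G, g ∈ N := fun g hg => hG ▸ Submodule.subset_span hg
    choose! t ht htm using hcon
    set t0 := ∏ g ∈ G, t g with ht0
    have ht0m : t0 ∉ m := by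
      rw [ht0, hm.prod_mem_iff]
      rintro ⟨g, hg, h⟩
      exact htm g (hGN g hg) h
    have hdiv : ∀ w ∈ N, t0 • w ∈ a • N := by
      have key : N ≤ (a • N).comap (LinearMap.lsmul T M t0) := by
        conv_lhs => rw [← hG]
        rw [Submodule.span_le]
        intro g hg
        have hg' : g ∈ G := hg
        change t0 • g ∈ a • N
        rw [ht0, ← Finset.prod_erase_mul G t hg', mul_smul]
        apply Submodule.smul_mem
        obtain ⟨w, _, hw⟩ := (Submodule.mem_smul_pointwise_iff_exists _ _ _).1 (ht g (hGN g hg'))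
        rw [← hw]
        apply Submodule.smul_mem_pointwise_smul
        intro r hr
        apply hreg
        change a • (r • w) = a • (0 : M)
        rw [smul_zero, smul_comm, hw, smul_comm, hGN g hg' r hr, smul_zero]
      exact key
    let f : N →ₗ[T] N := LinearMap.lsmul T N t0
    have hf : LinearMap.range f ≤ Ideal.span {a} • (⊤ : Submodule T N) := by
      rintro _ ⟨w, rfl⟩
      obtain ⟨w', hw', h⟩ := (Submodule.mem_smul_pointwise_iff_exists _ _ _).1 (hdiv w w.2)
      have : f w = a • (⟨w', hw'⟩ : N) := Subtype.ext h.symm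
      rw [this]
      exact Submodule.smul_mem_smul (Ideal.mem_span_singleton_self a) trivial
    obtain ⟨p, hpm, -, hpc, hp0⟩ :=
      LinearMap.exists_monic_and_natDegree_eq_and_coeff_mem_pow_and_aeval_eq_zero T f _ hf
    have hev : ∀ P : Polynomial T, (Polynomial.aeval f P) ⟨z, hzN⟩ = (P.eval t0) • (⟨z, hzN⟩ : N) := by
      intro P
      have hfe : f = algebraMap T (Module.End T N) t0 := by
        ext w; rfl
      rw [hfe, Polynomial.aeval_algebraMap_apply]
      simp
    have h1 : p.eval t0 ∈ q := by
      rw [← hz]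
      have := hev p
      rw [hp0] at this
      exact (congrArg Subtype.val this).symm
    have h2 : p.eval t0 - t0 ^ p.natDegree ∈ m := by
      rw [Polynomial.eval_eq_sum_range, Finset.sum_range_succ, hpm.coeff_natDegree, one_mul,
        add_sub_cancel_right]
      refine Ideal.sum_mem _ fun i hi => ?_
      apply Ideal.mul_mem_right
      have hi' : i < p.natDegree := Finset.mem_range.1 hi
      have h3 := hpc i
      have h4 : Ideal.span {a} ^ (p.natDegree - i) ≤ m :=
        (Ideal.pow_le_self (by omega)).trans ((Ideal.span_singleton_le_iff_mem m).2 ham)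
      exact h4 h3
    have h3 : t0 ^ p.natDegree ∈ m := by
      have := m.sub_mem (hqm h1) h2
      simpa using this
    exact ht0m (hm.mem_of_pow_mem _ h3)
  obtain ⟨w, hwN, hw⟩ := this
  let wb : QuotSMulTop a M := Submodule.Quotient.mk w
  let C : Submodule T (QuotSMulTop a M) := Submodule.span T {wb}
  have hannm : Module.annihilator T C ≤ m := by
    intro t ht
    apply hw
    have := Module.mem_annihilator.1 ht ⟨wb, Submodule.mem_span_singleton_self wb⟩
    have h2 : t • wb = 0 := congrArg Subtype.val this
    change Submodule.Quotient.mk (t • w) = _ at h2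
    exact (Submodule.Quotient.mk_eq_zero _).1 h2
  have hCann : ∀ t : T, t • wb = 0 → t ∈ Module.annihilator T C := by
    intro t ht
    rw [Module.mem_annihilator]
    rintro ⟨c, hc⟩
    obtain ⟨b, rfl⟩ := Submodule.mem_span_singleton.1 hc
    apply Subtype.ext
    change t • b • wb = 0
    rw [smul_comm, ht, smul_zero]
  have hqann : q ≤ Module.annihilator T C := by
    intro r hr
    apply hCann
    change Submodule.Quotient.mk (r • w) = _
    rw [hwN r hr]; rfl
  have haann : a ∈ Module.annihilator T C := by
    apply hCann
    change Submodule.Quotient.mk (a • w) = _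
    rw [Submodule.Quotient.mk_eq_zero]
    exact Submodule.smul_mem_pointwise_smul _ _ _ trivial
  obtain ⟨q', hq'min, hq'm⟩ := Ideal.exists_minimalPrimes_le hannm
  have hq'ass := Module.associatedPrimes.minimalPrimes_annihilator_subset_associatedPrimes T C hq'min
  have haq : a ∉ q := by
    intro h
    have h1 : a • z = a • (0 : M) := by rw [smul_zero]; exact (hz a).2 h
    have h2 : z = 0 := hreg h1
    apply hq.ne_top
    rw [Ideal.eq_top_iff_one, ← hz, h2, smul_zero]
  obtain ⟨hq'p, x, hx⟩ := isAssociatedPrime_iff.1 (AssociatedPrimes.mem_iff.1 hq'ass)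
  refine ⟨q', hq'min.1.1, hq'm, ?_, x.1, ?_⟩
  · refine lt_of_le_of_ne (hqann.trans hq'min.1.2) ?_
    intro h
    exact haq (h ▸ hq'min.1.2 haann)
  · intro r
    rw [hx]
    rw [← Submodule.coe_smul, ZeroMemClass.coe_eq_zero]
    simp [Submodule.mem_colon_singleton]

lemma ass_chain (m : Ideal T) [hm : m.IsPrime] (rs : List T) :
    ∀ {M : Type*} [AddCommGroup M] [Module T M] [Module.Finite T M]
    (q : Ideal T) [_hq : q.IsPrime] (_ : q ≤ m) (z : M)
    (_ : ∀ r : T, r • z = 0 ↔ r ∈ q) (_ : ∀ r ∈ rs, r ∈ m)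
    (_ : RingTheory.Sequence.IsWeaklyRegular M rs),
    ∃ q' : Ideal T, q'.IsPrime ∧ q.height + rs.length ≤ q'.height := by
  induction rs with
  | nil =>
    intro M _ _ _ q hq hqm z hz _ _
    exact ⟨q, hq, by simp⟩
  | cons a rs ih =>
    intro M _ _ _ q hq hqm z hz hrs hreg
    rw [RingTheory.Sequence.isWeaklyRegular_cons_iff] at hreg
    obtain ⟨q', hq', hq'm, hlt, z', hz'⟩ := ass_step m q hqm z hz a (hrs a (by simp)) hreg.1
    obtain ⟨q'', hq'', hle⟩ := ih q' hq'm z' hz' (fun r hr => hrs r (by simp [hr])) hreg.2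
    refine ⟨q'', hq'', le_trans ?_ hle⟩
    have h1 := Ideal.height_strict_mono_of_isPrime_of_isPrime hlt
    have h2 : q.height + 1 ≤ q'.height := Order.add_one_le_of_lt h1
    rw [List.length_cons, Nat.cast_add, Nat.cast_one, add_comm (rs.length : ℕ∞), ← add_assoc]
    gcongr

end ass

end DepthSym

namespace DepthSym

section base

universe u v w

/-- `T` is a polynomial ring over `K` on a basis of `V` together with the variables `y`. -/
structure Amb (K : Type u) [Field K] {V : Type v} [AddCommGroup V] [Module K V] {ι : Type w}
    {T : Type u} [CommRing T] [Algebra K T] (L : V →ₗ[K] T) (y : ι → T) : Prop where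
  dom : IsDomain T
  inj : Function.Injective L
  y_ne : ∀ j, y j ≠ 0
  univ : ∀ (B : Type u) [CommRing B] [Algebra K B] (a : V →ₗ[K] B) (b : ι → B),
    ∃ φ : T →ₐ[K] B, (∀ v, φ (L v) = a v) ∧ ∀ j, φ (y j) = b j
  ext : ∀ (B : Type u) [CommRing B] [Algebra K B] (f g : T →ₐ[K] B),
    (∀ v, f (L v) = g (L v)) → (∀ j, f (y j) = g (y j)) → f = g

variable {K : Type u} [Field K] {V : Type v} [AddCommGroup V] [Module K V] {ι : Type w}
    {T : Type u} [CommRing T] [Algebra K T] {L : V →ₗ[K] T} {y : ι → T}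

/-- generated ideals -/
def gen (L : V →ₗ[K] T) (W : Submodule K V) (G : Set T) : Ideal T :=
  Ideal.span (L '' W ∪ G)

lemma L_mem_gen {W : Submodule K V} {G : Set T} {v : V} (h : v ∈ W) :
    L v ∈ gen L W G := Ideal.subset_span (Or.inl ⟨v, h, rfl⟩)

lemma mem_gen {W : Submodule K V} {G : Set T} {g : T} (h : g ∈ G) :
    g ∈ gen L W G := Ideal.subset_span (Or.inr h)

lemma gen_le {W : Submodule K V} {G : Set T} {J : Ideal T}
    (h1 : ∀ v ∈ W, L v ∈ J) (h2 : ∀ g ∈ G, g ∈ J) : gen L W G ≤ J := by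
  apply Ideal.span_le.2
  rintro f (⟨v, hv, rfl⟩ | hf)
  · exact h1 v hv
  · exact h2 f hf

lemma gen_insert (W : Submodule K V) (G : Set T) (g : T) :
    gen L W (insert g G) = gen L W G ⊔ Ideal.span {g} := by
  apply le_antisymm
  · refine gen_le (fun v hv => Ideal.mem_sup_left (L_mem_gen hv)) ?_
    rintro x (rfl | hx)
    · exact Ideal.mem_sup_right (Ideal.mem_span_singleton_self _)
    · exact Ideal.mem_sup_left (mem_gen hx)
  · refine sup_le (gen_le (fun v hv => L_mem_gen hv) fun x hx => mem_gen (Or.inr hx)) ?_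
    rw [Ideal.span_singleton_le_iff_mem]
    exact mem_gen (Or.inl rfl)

lemma gen_sup_L (W : Submodule K V) (G : Set T) (v : V) :
    gen L (W ⊔ Submodule.span K {v}) G = gen L W G ⊔ Ideal.span {L v} := by
  apply le_antisymm
  · refine gen_le ?_ (fun g hg => Ideal.mem_sup_left (mem_gen hg))
    intro u hu
    obtain ⟨w, hw, z, hz, rfl⟩ := Submodule.mem_sup.1 hu
    obtain ⟨r, rfl⟩ := Submodule.mem_span_singleton.1 hz
    rw [map_add, map_smul]
    refine add_mem (Ideal.mem_sup_left (L_mem_gen hw)) (Ideal.mem_sup_right ?_)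
    exact Submodule.smul_of_tower_mem _ r (Ideal.mem_span_singleton_self _)
  · refine sup_le (gen_le (fun v hv => L_mem_gen (Submodule.mem_sup_left hv))
      fun x hx => mem_gen hx) ?_
    rw [Ideal.span_singleton_le_iff_mem]
    exact L_mem_gen (Submodule.mem_sup_right (Submodule.mem_span_singleton_self v))

lemma exists_proj (W : Submodule K V) :
    ∃ π : V →ₗ[K] V, (∀ v ∈ W, π v = 0) ∧ ∀ v, v - π v ∈ W := by
  obtain ⟨g, hg⟩ := W.mkQ.exists_rightInverse_of_surjective (Submodule.range_mkQ W)
  refine ⟨g ∘ₗ W.mkQ, fun v hv => ?_, fun v => ?_⟩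
  · simp [(Submodule.Quotient.mk_eq_zero W).2 hv]
  · rw [← Submodule.Quotient.mk_eq_zero, ← Submodule.mkQ_apply, map_sub]
    have := LinearMap.congr_fun hg (W.mkQ v)
    simp only [LinearMap.comp_apply, LinearMap.id_apply] at this ⊢
    rw [this, sub_self]

lemma exists_phi (H : Amb K L y) (W : Submodule K V) (Y : Set ι) :
    ∃ (φ : T →ₐ[K] T), (∀ f, φ f = 0 ↔ f ∈ gen L W (y '' Y)) ∧
      (∀ v, φ (L v) = 0 ↔ v ∈ W) ∧ (∀ j, φ (y j) = 0 ↔ j ∈ Y) := by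
  classical
  obtain ⟨π, h1, h2⟩ := exists_proj W
  obtain ⟨φ, hL, hX⟩ := H.univ T (L ∘ₗ π) (fun j => if j ∈ Y then 0 else y j)
  replace hL : ∀ v, φ (L v) = L (π v) := hL
  refine ⟨φ, fun f => ⟨fun h => ?_, fun h => ?_⟩, fun v => ?_, fun j => ?_⟩
  · have : (Ideal.Quotient.mkₐ K (gen L W (y '' Y))).comp φ =
        Ideal.Quotient.mkₐ K (gen L W (y '' Y)) := by
      apply H.ext
      · intro v
        rw [AlgHom.comp_apply, hL]
        simp only [Ideal.Quotient.mkₐ_eq_mk]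
        symm
        rw [Ideal.Quotient.eq, ← map_sub]
        exact L_mem_gen (h2 _)
      · intro j
        rw [AlgHom.comp_apply, hX]
        simp only [Ideal.Quotient.mkₐ_eq_mk]
        split_ifs with hj
        · rw [map_zero, eq_comm, Ideal.Quotient.eq_zero_iff_mem]
          exact mem_gen ⟨j, hj, rfl⟩
        · rfl
    have h3 := AlgHom.congr_fun this f
    rw [AlgHom.comp_apply, h, map_zero] at h3
    exact Ideal.Quotient.eq_zero_iff_mem.1 h3.symm
  · have : gen L W (y '' Y) ≤ RingHom.ker φ := by
      apply gen_le
      · intro v hv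
        rw [RingHom.mem_ker, hL, h1 v hv, map_zero]
      · rintro _ ⟨j, hj, rfl⟩
        rw [RingHom.mem_ker, hX, if_pos hj]
    exact this h
  · rw [hL, map_eq_zero_iff _ H.inj]
    constructor
    · intro h
      simpa [h] using h2 v
    · exact h1 v
  · rw [hX]
    have := H.y_ne j
    split_ifs with hj <;> simp [hj, this]

lemma finrank_sup_le [FiniteDimensional K V] (W : Submodule K V) (v : V) :
    Module.finrank K (W ⊔ Submodule.span K {v} : Submodule K V) ≤
      Module.finrank K W + 1 := by
  refine (Submodule.finrank_add_le_finrank_add_finrank _ _).trans (Nat.add_le_add_left ?_ _)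
  exact (finrank_span_le_card ({v} : Set V)).trans (by simp)

lemma DP_base [FiniteDimensional K V] [Fintype ι] (H : Amb K L y) {mx : Ideal T}
    (hL : ∀ v, L v ∈ mx) (hX : ∀ j, y j ∈ mx) (t : ℕ) :
    ∀ (W : Submodule K V) (Y : Finset ι),
    Module.finrank K W + Y.card + t ≤ Fintype.card ι + Module.finrank K V →
    DP mx t (gen L W (y '' (Y : Set ι))) := by
  classical
  have := H.dom
  induction t with
  | zero => intro W Y _ i hi; omega
  | succ t ih =>
    intro W Y h
    obtain ⟨φ, h1, h2, h3⟩ := exists_phi H W Y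
    have hreg : ∀ a, φ a ≠ 0 → ∀ f, a * f ∈ gen L W (y '' (Y : Set ι)) →
        f ∈ gen L W (y '' (Y : Set ι)) := by
      intro a ha f hf
      rw [← h1, map_mul] at hf
      rw [← h1]
      exact (mul_eq_zero.1 hf).resolve_left ha
    by_cases hW : ∃ v, v ∉ W
    · obtain ⟨v, hv⟩ := hW
      refine DP_regular (hL v) (hreg _ (mt (h2 v).1 hv)) ?_
      rw [← gen_sup_L]
      apply ih
      have := finrank_sup_le W v
      omega
    · push Not at hW
      have hWt : W = ⊤ := eq_top_iff.2 fun v _ => hW v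
      have hY : ∃ j, j ∉ Y := by
        by_contra! hY
        have : Y = Finset.univ := Finset.eq_univ_iff_forall.2 hY
        subst hWt this
        rw [finrank_top, Finset.card_univ] at h
        omega
      obtain ⟨j, hj⟩ := hY
      refine DP_regular (hX j) (hreg _ (mt (h3 j).1 (by simpa using hj))) ?_
      rw [← gen_insert, ← Set.image_insert_eq, ← Finset.coe_insert]
      apply ih
      rw [Finset.card_insert_of_notMem hj]
      omega

/-- treat `y_j` as a free variable over the quotient -/
lemma exists_tau [DecidableEq ι] (H : Amb K L y) (J : Ideal T) (j : ι) :
    ∃ τ : T →ₐ[K] Polynomial (T ⧸ J),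
      (∀ v, τ (L v) = Polynomial.C (Ideal.Quotient.mk J (L v))) ∧
      (τ (y j) = Polynomial.X) ∧
      (∀ i, i ≠ j → τ (y i) = Polynomial.C (Ideal.Quotient.mk J (y i))) ∧
      (∀ f, (τ f).eval (Ideal.Quotient.mk J (y j)) = Ideal.Quotient.mk J f) := by
  obtain ⟨τ, h1, h2⟩ := H.univ (Polynomial (T ⧸ J))
    (((Algebra.ofId (T ⧸ J) (Polynomial (T ⧸ J))).restrictScalars K).toLinearMap ∘ₗ
      (Ideal.Quotient.mkₐ K J).toLinearMap ∘ₗ L)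
    (fun i => if i = j then Polynomial.X else Polynomial.C (Ideal.Quotient.mk J (y i)))
  have h1' : ∀ v, τ (L v) = Polynomial.C (Ideal.Quotient.mk J (L v)) := fun v => h1 v
  have h2' : τ (y j) = Polynomial.X := by rw [h2, if_pos rfl]
  have h3' : ∀ i, i ≠ j → τ (y i) = Polynomial.C (Ideal.Quotient.mk J (y i)) :=
    fun i hi => by rw [h2, if_neg hi]
  refine ⟨τ, h1', h2', h3', ?_⟩
  intro f
  have : ((Polynomial.aeval (R := T ⧸ J) (Ideal.Quotient.mk J (y j))).restrictScalars K).comp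
      τ = Ideal.Quotient.mkₐ K J := by
    apply H.ext
    · intro i
      rw [AlgHom.comp_apply, h1']
      simp
    · intro i
      rw [AlgHom.comp_apply]
      by_cases h : i = j
      · subst h
        rw [h2']; simp
      · rw [h3' _ h]; simp
  have h := AlgHom.congr_fun this f
  simpa [Polynomial.aeval_def] using h

lemma tau_gen {j : ι} {W : Submodule K V} {G : Set T} {J : Ideal T} (hJ : J = gen L W G)
    {τ : T →ₐ[K] Polynomial (T ⧸ J)}
    (h1 : ∀ v, τ (L v) = Polynomial.C (Ideal.Quotient.mk J (L v)))
    (h2 : ∀ f, (τ f).eval (Ideal.Quotient.mk J (y j)) = Ideal.Quotient.mk J f)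
    (h : ∀ g ∈ G, τ g = Polynomial.C (Ideal.Quotient.mk J g)) (f : T) :
    f ∈ J ↔ τ f = 0 := by
  constructor
  · intro hf
    have : gen L W G ≤ RingHom.ker τ := by
      apply gen_le
      · intro v hv
        rw [RingHom.mem_ker, h1, Ideal.Quotient.eq_zero_iff_mem.2 (hJ ▸ L_mem_gen hv), map_zero]
      · intro g hg
        rw [RingHom.mem_ker, h g hg, Ideal.Quotient.eq_zero_iff_mem.2 (hJ ▸ mem_gen hg), map_zero]
    rw [hJ] at hf
    exact this hf
  · intro hf
    rw [← Ideal.Quotient.eq_zero_iff_mem, ← h2 f, hf, Polynomial.eval_zero]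

end base

end DepthSym

namespace DepthSym

section claims

universe u v w

variable {K : Type u} [Field K] {V : Type v} [AddCommGroup V] [Module K V] {ι : Type w}
    {T : Type u} [CommRing T] [Algebra K T] {L : V →ₗ[K] T} {y : ι → T}

/-- monomial-type ideals -/
def JB (L : V →ₗ[K] T) (y : ι → T) (c : ι → V) (W : Submodule K V) (S : Finset ι) : Ideal T :=
  gen L W ((fun j => L (c j) * y j) '' (S : Set ι))

/-- difference-type ideals -/
def JA (L : V →ₗ[K] T) (y : ι → T) (c : ι → V) (o : ι) (W : Submodule K V) (S : Finset ι) :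
    Ideal T :=
  gen L W ((fun j => L (c o) * y o - L (c j) * y j) '' (S : Set ι))

variable [DecidableEq ι] {c : ι → V} {o : ι}

lemma JB_insert (W : Submodule K V) (S : Finset ι) (j : ι) :
    JB L y c W (insert j S) = JB L y c W S ⊔ Ideal.span {L (c j) * y j} := by
  rw [JB, Finset.coe_insert, Set.image_insert_eq, gen_insert, JB]

lemma JA_insert (W : Submodule K V) (S : Finset ι) (j : ι) :
    JA L y c o W (insert j S) =
      JA L y c o W S ⊔ Ideal.span {L (c o) * y o - L (c j) * y j} := by
  rw [JA, Finset.coe_insert, Set.image_insert_eq, gen_insert, JA]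

lemma JB_tau (H : Amb K L y) (W : Submodule K V) (S : Finset ι) (j : ι) (hj : j ∉ S) (f : T)
    (hf : y j * f ∈ JB L y c W S) : f ∈ JB L y c W S := by
  obtain ⟨τ, h1, h2, h3, h4⟩ := exists_tau H (JB L y c W S) j
  have hτ : ∀ f, f ∈ JB L y c W S ↔ τ f = 0 := by
    apply tau_gen (J := JB L y c W S) rfl h1 h4
    rintro _ ⟨i, hi, rfl⟩
    have : i ≠ j := by rintro rfl; exact hj hi
    simp only
    rw [map_mul τ, h1, h3 i this, map_mul, map_mul]
  rw [hτ, map_mul, h2] at hf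
  rw [hτ]
  exact (Polynomial.monic_X).isRegular.left (by simpa using hf)

lemma claimB [FiniteDimensional K V] [Fintype ι] (H : Amb K L y) {mx : Ideal T}
    (hL : ∀ v, L v ∈ mx) (hX : ∀ j, y j ∈ mx) (S : Finset ι) : ∀ (W : Submodule K V) (d : ℕ),
    Module.finrank K W + S.card + d ≤ Fintype.card ι + Module.finrank K V →
    DP mx d (JB L y c W S) := by
  induction S using Finset.induction_on with
  | empty =>
    intro W d h
    have := DP_base H hL hX d W ∅ h
    simpa [JB] using this
  | insert j S hj ih =>
    intro W d h
    rw [Finset.card_insert_of_notMem hj] at h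
    rw [JB_insert]
    refine DP_replace (a := L (c j)) (fun f => ⟨fun hf => ?_, fun hf => ?_⟩) (ih W (d + 1) (by omega)) ?_
    · rw [mul_right_comm]
      exact Ideal.mul_mem_right _ _ hf
    · rw [mul_comm (L (c j)), mul_assoc] at hf
      exact JB_tau H W S j hj _ hf
    · rw [JB, ← gen_sup_L]
      apply ih
      have := finrank_sup_le W (c j)
      omega

lemma s_mem_JA {W : Submodule K V} {S : Finset ι} {i : ι} (hi : i ∈ insert o S) (hW : c i ∈ W) :
    L (c o) * y o ∈ JA L y c o W S := by
  have h1 : L (c i) * y i ∈ JA L y c o W S := Ideal.mul_mem_right _ _ (L_mem_gen hW)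
  rcases Finset.mem_insert.1 hi with rfl | hi
  · exact h1
  · have h2 : L (c o) * y o - L (c i) * y i ∈ JA L y c o W S := mem_gen ⟨i, hi, rfl⟩
    have := add_mem h2 h1
    rwa [sub_add_cancel] at this

lemma JA_eq_JB {W : Submodule K V} {S : Finset ι} {i : ι} (hi : i ∈ insert o S)
    (hW : c i ∈ W) : JA L y c o W S = JB L y c W ((insert o S).erase i) := by
  have hs := s_mem_JA (L := L) (y := y) hi hW
  apply le_antisymm
  · have h1 : ∀ j ∈ insert o S, L (c j) * y j ∈ JB L y c W ((insert o S).erase i) := by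
      intro j hj
      by_cases h : j = i
      · subst h
        exact Ideal.mul_mem_right _ _ (L_mem_gen hW)
      · exact mem_gen ⟨j, by simpa [h] using hj, rfl⟩
    refine gen_le (fun v hv => L_mem_gen hv) ?_
    rintro _ ⟨j, hj, rfl⟩
    exact sub_mem (h1 o (Finset.mem_insert_self _ _)) (h1 j (Finset.mem_insert_of_mem hj))
  · refine gen_le (fun v hv => L_mem_gen hv) ?_
    rintro _ ⟨j, hj, rfl⟩
    have hj' := (Finset.mem_erase.1 (Finset.mem_coe.1 hj)).2
    rcases Finset.mem_insert.1 hj' with rfl | h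
    · exact hs
    · have h2 : L (c o) * y o - L (c j) * y j ∈ JA L y c o W S := mem_gen ⟨j, h, rfl⟩
      have := sub_mem hs h2
      rwa [sub_sub_cancel] at this

/-- multiplicative set of allowed denominators -/
def Mon (L : V →ₗ[K] T) (s : T) (W : Submodule K V) : Submonoid T :=
  Submonoid.closure ({s} ∪ L '' {v | v ∉ W})

lemma s_mem_Mon {s : T} {W : Submodule K V} : s ∈ Mon L s W :=
  Submonoid.subset_closure (Or.inl rfl)

lemma L_mem_Mon {s : T} {W : Submodule K V} {v : V} (h : v ∉ W) : L v ∈ Mon L s W :=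
  Submonoid.subset_closure (Or.inr ⟨v, h, rfl⟩)

lemma Mon_induction {s : T} {W : Submodule K V} {P : T → Prop} (hs : P s)
    (hL : ∀ v, v ∉ W → P (L v)) (h1 : P 1) (hm : ∀ a b, P a → P b → P (a * b)) :
    ∀ p ∈ Mon L s W, P p := by
  intro p hp
  induction hp using Submonoid.closure_induction with
  | mem x hx =>
    rcases hx with hx | ⟨v, hv, rfl⟩
    · rw [hx]; exact hs
    · exact hL v hv
  | one => exact h1
  | mul a b _ _ ha hb => exact hm a b ha hb

lemma JA_tau (H : Amb K L y) (W : Submodule K V) {S : Finset ι} {j : ι} (hj : j ∉ insert o S)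
    (J : Ideal T) (hJ : J = JA L y c o W S) :
    ∃ τ : T →ₐ[K] Polynomial (T ⧸ J),
      (∀ v, τ (L v) = Polynomial.C (Ideal.Quotient.mk J (L v))) ∧
      (τ (y j) = Polynomial.X) ∧
      τ (L (c o) * y o) = Polynomial.C (Ideal.Quotient.mk J (L (c o) * y o)) ∧
      (∀ f, (τ f).eval (Ideal.Quotient.mk J (y j)) = Ideal.Quotient.mk J f) ∧
      (∀ f, f ∈ J ↔ τ f = 0) := by
  obtain ⟨τ, h1, h2, h3, h4⟩ := exists_tau H J j
  have h5 : ∀ i ∈ insert o S,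
      τ (L (c i) * y i) = Polynomial.C (Ideal.Quotient.mk J (L (c i) * y i)) := by
    intro i hi
    have : i ≠ j := by rintro rfl; exact hj hi
    rw [map_mul τ, h1, h3 i this, map_mul, map_mul]
  refine ⟨τ, h1, h2, h5 o (Finset.mem_insert_self _ _), h4, ?_⟩
  apply tau_gen hJ h1 h4
  rintro _ ⟨i, hi, rfl⟩
  simp only
  rw [map_sub τ, h5 o (Finset.mem_insert_self _ _), h5 i (Finset.mem_insert_of_mem hi), map_sub,
    map_sub]

lemma claimQ (H : Amb K L y) (S : Finset ι) : ∀ (_ : o ∉ S) (W : Submodule K V)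
    (_ : ∀ i ∈ insert o S, c i ∉ W), ∀ p ∈ Mon L (L (c o) * y o) W, ∀ f,
      p * f ∈ JA L y c o W S → L (c o) * y o * f ∈ JA L y c o W S := by
  have := H.dom
  induction S using Finset.induction_on with
  | empty =>
    intro _ W hW p hp f hf
    have hg : JA L y c o W ∅ = gen L W (y '' ∅) := by simp [JA]
    obtain ⟨φ, h1, h2, h3⟩ := exists_phi H W (∅ : Set ι)
    rw [hg, ← h1] at hf ⊢
    have hne : φ p ≠ 0 := by
      clear hf
      revert p
      apply Mon_induction
      · rw [map_mul]
        exact mul_ne_zero (mt (h2 _).1 (hW o (by simp))) (mt (h3 _).1 (by simp))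
      · intro v hv
        exact mt (h2 v).1 hv
      · rw [map_one]; exact one_ne_zero
      · intro a b ha hb
        rw [map_mul]
        exact mul_ne_zero ha hb
    rw [map_mul] at hf ⊢
    rw [(mul_eq_zero.1 hf).resolve_left hne, mul_zero]
  | insert j S hj ih =>
    intro ho W hW p hp f hf
    have hoj : o ≠ j := by rintro rfl; exact ho (Finset.mem_insert_self _ _)
    have hoS : o ∉ S := fun h => ho (Finset.mem_insert_of_mem h)
    have hjo : j ∉ insert o S := by
      rw [Finset.mem_insert]; rintro (h | h)
      · exact hoj h.symm
      · exact hj h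
    have hWS : ∀ i ∈ insert o S, c i ∉ W := by
      intro i hi
      apply hW
      simp only [Finset.mem_insert] at hi ⊢
      tauto
    have hcj : c j ∉ W := hW j (by simp)
    set s := L (c o) * y o with hs
    set l := L (c j) with hl
    set J := JA L y c o W S with hJ
    set W' := W ⊔ Submodule.span K {c j} with hW'
    have hJ' : JA L y c o W' S = J ⊔ Ideal.span {l} := gen_sup_L _ _ _
    rw [JA_insert, ← hs, ← hJ] at hf ⊢
    set J' := J ⊔ Ideal.span {s - l * y j} with hJ'def
    have hMM : ∀ q ∈ Mon L s W', q ∈ Mon L s W := by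
      apply Mon_induction
      · exact s_mem_Mon
      · intro v hv
        exact L_mem_Mon fun h => hv (Submodule.mem_sup_left h)
      · exact one_mem _
      · intro a b ha hb
        exact mul_mem ha hb
    have hrep : ∀ p ∈ Mon L s W, ∃ q, ∃ p' ∈ Mon L s W', p * q - p' ∈ J' := by
      apply Mon_induction
      · exact ⟨1, s, s_mem_Mon, by simp⟩
      · intro v hv
        by_cases hv' : v ∈ W'
        · obtain ⟨w, hw, z, hz, rfl⟩ := Submodule.mem_sup.1 hv'
          obtain ⟨r, rfl⟩ := Submodule.mem_span_singleton.1 hz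
          have hr : r ≠ 0 := by
            rintro rfl
            apply hv
            simpa using hw
          refine ⟨r⁻¹ • y j, s, s_mem_Mon, ?_⟩
          have e : L (w + r • c j) * r⁻¹ • y j - s = L w * r⁻¹ • y j - (s - l * y j) := by
            rw [map_add, map_smul, add_mul, smul_mul_smul_comm, mul_inv_cancel₀ hr, one_smul]
            ring
          rw [e]
          refine sub_mem (Ideal.mem_sup_left (Ideal.mul_mem_right _ _ (L_mem_gen hw))) ?_
          exact Ideal.mem_sup_right (Ideal.mem_span_singleton_self _)
        · exact ⟨1, L v, L_mem_Mon hv', by simp⟩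
      · exact ⟨1, 1, one_mem _, by simp⟩
      · rintro a b ⟨q1, p1, hp1, h1⟩ ⟨q2, p2, hp2, h2⟩
        refine ⟨q1 * q2, p1 * p2, mul_mem hp1 hp2, ?_⟩
        have e : a * b * (q1 * q2) - p1 * p2 =
          (a * q1 - p1) * (b * q2) + p1 * (b * q2 - p2) := by ring
        rw [e]
        exact add_mem (Ideal.mul_mem_right _ _ h1) (Ideal.mul_mem_left _ _ h2)
    obtain ⟨q, p', hp', hpq⟩ := hrep p hp
    have hf' : p' * f ∈ J' := by
      have e : p' * f = q * (p * f) - (p * q - p') * f := by ring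
      rw [e]
      exact sub_mem (Ideal.mul_mem_left _ _ hf) (Ideal.mul_mem_right _ _ hpq)
    obtain ⟨τ, t1, t2, t3, t4, t5⟩ := JA_tau (c := c) H W hjo J hJ
    have hτM : ∀ q ∈ Mon L s W', τ q = Polynomial.C (Ideal.Quotient.mk J q) := by
      apply Mon_induction
      · exact t3
      · intro v _
        exact t1 v
      · simp
      · intro a b ha hb
        rw [map_mul τ, ha, hb, map_mul, map_mul]
    have hτg : τ (s - l * y j) = Polynomial.C (Ideal.Quotient.mk J s) -
        Polynomial.C (Ideal.Quotient.mk J l) * Polynomial.X := by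
      rw [map_sub, map_mul τ l (y j), t2, t1, t3]
    have hdvd : (Polynomial.C (Ideal.Quotient.mk J s) -
        Polynomial.C (Ideal.Quotient.mk J l) * Polynomial.X) ∣
        Polynomial.C (Ideal.Quotient.mk J p') * τ f := by
      obtain ⟨a, ha, b, hb, hab⟩ := Submodule.mem_sup.1 hf'
      obtain ⟨b, rfl⟩ := Ideal.mem_span_singleton'.1 hb
      rw [← hτM p' hp', ← map_mul, ← hab, map_add, (t5 a).1 ha, zero_add, map_mul τ b, hτg]
      exact dvd_mul_left _ _
    have hres := poly_main (s := Ideal.Quotient.mk J s) (l := Ideal.Quotient.mk J l)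
      ((Mon L s W').map (Ideal.Quotient.mk J)) ⟨s, s_mem_Mon, rfl⟩ (by
        intro a ha
        obtain ⟨a, rfl⟩ := Ideal.Quotient.mk_surjective a
        rw [← map_mul, Ideal.Quotient.eq_zero_iff_mem] at ha ⊢
        exact ih hoS W hWS l (L_mem_Mon hcj) a ha) (by
        rintro _ ⟨q, hq, rfl⟩ a ha
        obtain ⟨a, rfl⟩ := Ideal.Quotient.mk_surjective a
        rw [← map_mul, Ideal.Quotient.eq_zero_iff_mem] at ha ⊢
        exact ih hoS W hWS q (hMM q hq) a ha) (by
        rintro _ ⟨q, hq, rfl⟩ a ha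
        obtain ⟨a, rfl⟩ := Ideal.Quotient.mk_surjective a
        have key : ∀ x, Ideal.Quotient.mk J l ∣ Ideal.Quotient.mk J x ↔
            x ∈ JA L y c o W' S := by
          intro x
          rw [hJ']
          constructor
          · rintro ⟨b, hb⟩
            obtain ⟨b, rfl⟩ := Ideal.Quotient.mk_surjective b
            rw [← map_mul, Ideal.Quotient.eq] at hb
            have := add_mem (Ideal.mem_sup_left hb : _ ∈ J ⊔ Ideal.span {l})
              (Ideal.mem_sup_right (Ideal.mul_mem_right b _ (Ideal.mem_span_singleton_self l)))
            rwa [sub_add_cancel] at this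
          · intro hx
            obtain ⟨a, ha, b, hb, rfl⟩ := Submodule.mem_sup.1 hx
            obtain ⟨b, rfl⟩ := Ideal.mem_span_singleton'.1 hb
            rw [map_add, Ideal.Quotient.eq_zero_iff_mem.2 ha, zero_add, map_mul]
            exact dvd_mul_left _ _
        rw [← map_mul, key] at ha ⊢
        by_cases hall : ∀ i ∈ insert o S, c i ∉ W'
        · exact ih hoS W' hall q hq a ha
        · push Not at hall
          obtain ⟨i, hi, hiW⟩ := hall
          exact Ideal.mul_mem_right _ _ (s_mem_JA hi hiW)) (τ f).natDegree _ ⟨p', hp', rfl⟩ (τ f)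
        le_rfl hdvd
    obtain ⟨B, hB⟩ := hres
    have := congrArg (Polynomial.eval (Ideal.Quotient.mk J (y j))) hB
    simp only [Polynomial.eval_mul, Polynomial.eval_C, Polynomial.eval_sub, Polynomial.eval_X,
      t4] at this
    obtain ⟨b, hb⟩ := Ideal.Quotient.mk_surjective (Polynomial.eval (Ideal.Quotient.mk J (y j)) B)
    rw [← hb, ← map_mul, ← map_mul, ← map_sub, ← map_mul, Ideal.Quotient.eq] at this
    have h2 := add_mem (Ideal.mem_sup_left this : _ ∈ J')
      (Ideal.mem_sup_right (Ideal.mul_mem_right b _ (Ideal.mem_span_singleton_self _)))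
    rwa [sub_add_cancel] at h2

lemma claimA [FiniteDimensional K V] [Fintype ι] (H : Amb K L y) {mx : Ideal T}
    (hL : ∀ v, L v ∈ mx) (hX : ∀ j, y j ∈ mx) (S : Finset ι) : ∀ (_ : o ∉ S)
    (W : Submodule K V) (d : ℕ),
    Module.finrank K W + S.card + d ≤ Fintype.card ι + Module.finrank K V →
    DP mx d (JA L y c o W S) := by
  induction S using Finset.induction_on with
  | empty =>
    intro _ W d h
    have := DP_base H hL hX d W ∅ h
    simpa [JA] using this
  | insert j S hj ih =>
    intro ho W d h
    by_cases hall : ∀ i ∈ insert o (insert j S), c i ∉ W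
    · rw [Finset.card_insert_of_notMem hj] at h
      have hoj : o ≠ j := by rintro rfl; exact ho (Finset.mem_insert_self _ _)
      have hoS : o ∉ S := fun h => ho (Finset.mem_insert_of_mem h)
      have hjo : j ∉ insert o S := by
        rw [Finset.mem_insert]; rintro (h | h)
        · exact hoj h.symm
        · exact hj h
      have hWS : ∀ i ∈ insert o S, c i ∉ W := by
        intro i hi
        apply hall
        simp only [Finset.mem_insert] at hi ⊢
        tauto
      rw [JA_insert]
      refine DP_replace (a := L (c j)) (fun f => ?_) (ih hoS W (d + 1) (by omega)) ?_
      · obtain ⟨τ, t1, t2, t3, t4, t5⟩ := JA_tau (c := c) H W hjo _ rfl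
        rw [t5, t5, map_mul, map_mul τ _ f, map_sub, t3, map_mul τ _ (y j), t2, t1]
        apply ann_g
        intro a ha
        obtain ⟨a, rfl⟩ := Ideal.Quotient.mk_surjective a
        rw [← map_mul, Ideal.Quotient.eq_zero_iff_mem] at ha ⊢
        exact claimQ H S hoS W hWS _ (L_mem_Mon (hall j (by simp))) a ha
      · rw [JA, ← gen_sup_L]
        apply ih hoS
        have := finrank_sup_le W (c j)
        omega
    · push Not at hall
      obtain ⟨i, hi, hiW⟩ := hall
      rw [JA_eq_JB hi hiW]
      apply claimB H hL hX
      rw [Finset.card_erase_of_mem hi, Finset.card_insert_of_notMem ho]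
      simpa using h

end claims

end DepthSym

namespace DepthSym

section upper

universe u v w

variable {K : Type u} [Field K] {V : Type v} [AddCommGroup V] [Module K V] {ι : Type w}
    {T : Type u} [CommRing T] [Algebra K T] {L : V →ₗ[K] T} {y : ι → T}

lemma Amb.mem_of (H : Amb K L y) (A : Subalgebra K T) (hL : ∀ v, L v ∈ A) (hy : ∀ j, y j ∈ A)
    (f : T) : f ∈ A := by
  obtain ⟨ψ, h1, h2⟩ := H.univ A (L.codRestrict (Subalgebra.toSubmodule A) hL)
    (fun j => ⟨y j, hy j⟩)
  have : A.val.comp ψ = AlgHom.id K T := by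
    apply H.ext
    · intro v
      rw [AlgHom.comp_apply, h1]
      rfl
    · intro j
      rw [AlgHom.comp_apply, h2]
      rfl
  have h := AlgHom.congr_fun this f
  rw [AlgHom.comp_apply, AlgHom.id_apply] at h
  rw [← h]
  exact (ψ f).2

variable [DecidableEq ι] {c : ι → V} {o : ι}

lemma L_ne (H : Amb K L y) {v : V} (hv : v ≠ 0) : L v ≠ 0 := by
  rw [Ne, map_eq_zero_iff _ H.inj]; exact hv

lemma ker_desc (H : Amb K L y) [IsDomain T] (hc : ∀ i, c i ≠ 0) (S : Finset ι) (ho : o ∉ S) :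
    ∃ φ : T →ₐ[K] FractionRing T,
      (∀ f, φ f = 0 ↔ L (c o) * y o * f ∈ JA L y c o ⊥ S) ∧
      (∀ v, φ (L v) = algebraMap T (FractionRing T) (L v)) ∧
      (∀ j, j ∉ S → φ (y j) = algebraMap T (FractionRing T) (y j)) := by
  set F := FractionRing T with hF
  obtain ⟨φ, h1, h2⟩ := H.univ F ((IsScalarTower.toAlgHom K T F).toLinearMap ∘ₗ L)
    (fun j => if j ∈ S then algebraMap T F (L (c o) * y o) / algebraMap T F (L (c j))
      else algebraMap T F (y j))
  replace h1 : ∀ v, φ (L v) = algebraMap T F (L v) := h1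
  have h3 : ∀ j, j ∉ S → φ (y j) = algebraMap T F (y j) := fun j hj => by
    rw [h2, if_neg hj]
  have hinj : Function.Injective (algebraMap T F) := IsFractionRing.injective T F
  have hs : φ (L (c o) * y o) = algebraMap T F (L (c o) * y o) := by
    rw [map_mul, h1, h3 o ho, map_mul]
  have hker : ∀ f ∈ JA L y c o ⊥ S, φ f = 0 := by
    have : JA L y c o ⊥ S ≤ RingHom.ker φ := by
      apply gen_le
      · intro v hv
        rw [(Submodule.mem_bot K).1 hv, map_zero]
        exact zero_mem _
      · rintro _ ⟨j, hj, rfl⟩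
        rw [RingHom.mem_ker, map_sub, hs, map_mul φ (L (c j)), h1, h2, if_pos (by simpa using hj),
          mul_div_cancel₀, sub_self]
        rw [Ne, map_eq_zero_iff _ hinj]
        exact L_ne H (hc j)
    exact this
  refine ⟨φ, fun f => ⟨fun hf => ?_, fun hf => ?_⟩, h1, h3⟩
  · have hM : ∀ p ∈ Mon L (L (c o) * y o) (⊥ : Submodule K V), φ p = algebraMap T F p := by
      apply Mon_induction
      · exact hs
      · intro v _
        exact h1 v
      · rw [map_one, map_one]
      · intro a b ha hb
        rw [map_mul, map_mul, ha, hb]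
    let A : Subalgebra K T :=
      { carrier := {f | ∃ p ∈ Mon L (L (c o) * y o) (⊥ : Submodule K V), ∃ f',
          φ f' = algebraMap T F f' ∧ p * f - f' ∈ JA L y c o ⊥ S}
        mul_mem' := by
          rintro a b ⟨p1, hp1, f1, e1, m1⟩ ⟨p2, hp2, f2, e2, m2⟩
          refine ⟨p1 * p2, mul_mem hp1 hp2, f1 * f2, by rw [map_mul, map_mul, e1, e2], ?_⟩
          have e : p1 * p2 * (a * b) - f1 * f2 =
            (p1 * a - f1) * (p2 * b) + f1 * (p2 * b - f2) := by ring
          rw [e]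
          exact add_mem (Ideal.mul_mem_right _ _ m1) (Ideal.mul_mem_left _ _ m2)
        add_mem' := by
          rintro a b ⟨p1, hp1, f1, e1, m1⟩ ⟨p2, hp2, f2, e2, m2⟩
          refine ⟨p1 * p2, mul_mem hp1 hp2, p2 * f1 + p1 * f2, ?_, ?_⟩
          · rw [map_add, map_add, map_mul, map_mul, map_mul, map_mul, e1, e2, hM _ hp1, hM _ hp2]
          have e : p1 * p2 * (a + b) - (p2 * f1 + p1 * f2) =
            p2 * (p1 * a - f1) + p1 * (p2 * b - f2) := by ring
          rw [e]
          exact add_mem (Ideal.mul_mem_left _ _ m1) (Ideal.mul_mem_left _ _ m2)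
        algebraMap_mem' := by
          intro r
          refine ⟨1, one_mem _, algebraMap K T r, ?_, by simp⟩
          rw [AlgHom.commutes, ← IsScalarTower.algebraMap_apply] }
    obtain ⟨p, hp, f', e, m⟩ : f ∈ A := by
      apply H.mem_of A
      · intro v
        exact ⟨1, one_mem _, L v, h1 v, by simp⟩
      · intro j
        by_cases hj : j ∈ S
        · refine ⟨L (c j), L_mem_Mon (by simpa using hc j), L (c o) * y o, hs, ?_⟩
          rw [← neg_sub]
          exact neg_mem (mem_gen ⟨j, hj, rfl⟩)
        · exact ⟨1, one_mem _, y j, h3 j hj, by simp⟩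
    have h5 := hker _ m
    rw [map_sub, map_mul, hf, mul_zero, zero_sub, neg_eq_zero, e, map_eq_zero_iff _ hinj] at h5
    rw [h5, sub_zero] at m
    exact claimQ H S ho ⊥ (fun i _ => by simpa using hc i) p hp f m
  · have h5 := hker _ hf
    rw [map_mul, hs] at h5
    refine (mul_eq_zero.1 h5).resolve_left ?_
    rw [map_eq_zero_iff _ hinj]
    exact mul_ne_zero (L_ne H (hc o)) (H.y_ne o)

lemma exists_q [IsNoetherianRing T] (H : Amb K L y) (hc : ∀ i, c i ≠ 0) (S : Finset ι) : o ∉ S →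
    ∃ q : Ideal T, q.IsPrime ∧ (∀ f, f ∈ q ↔ L (c o) * y o * f ∈ JA L y c o ⊥ S) ∧
      (S.card : ℕ∞) ≤ q.height := by
  have := H.dom
  have hq : ∀ S : Finset ι, o ∉ S →
      ∃ q : Ideal T, q.IsPrime ∧ (∀ f, f ∈ q ↔ L (c o) * y o * f ∈ JA L y c o ⊥ S) ∧
        (∀ j, j ∉ insert o S → L (c o) * y o - L (c j) * y j ∉ q) := by
    intro S ho
    obtain ⟨φ, h1, h2, h3⟩ := ker_desc H hc S ho
    refine ⟨RingHom.ker φ, RingHom.ker_isPrime _, fun f => by rw [RingHom.mem_ker, h1], ?_⟩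
    intro j hj hmem
    have hjo : j ≠ o := by rintro rfl; exact hj (Finset.mem_insert_self _ _)
    have hjS : j ∉ S := fun h => hj (Finset.mem_insert_of_mem h)
    rw [RingHom.mem_ker, map_sub, map_mul, map_mul, h2, h2, h3 o ho, h3 j hjS, ← map_mul,
      ← map_mul, ← map_sub, map_eq_zero_iff _ (IsFractionRing.injective T _)] at hmem
    obtain ⟨ψ, p1, p2, p3⟩ := exists_phi H (⊥ : Submodule K V) {o}
    have h5 := congrArg ψ hmem
    rw [map_sub, map_mul, (p3 o).2 rfl, mul_zero, zero_sub, map_zero, neg_eq_zero, map_mul] at h5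
    rcases mul_eq_zero.1 h5 with h | h
    · exact hc j (by simpa using (p2 _).1 h)
    · exact hjo ((p3 j).1 h)
  induction S using Finset.induction_on with
  | empty =>
    intro ho
    obtain ⟨q, h1, h2, -⟩ := hq ∅ ho
    exact ⟨q, h1, h2, by simp⟩
  | insert j S hj ih =>
    intro ho
    have hoj : o ≠ j := by rintro rfl; exact ho (Finset.mem_insert_self _ _)
    have hoS : o ∉ S := fun h => ho (Finset.mem_insert_of_mem h)
    obtain ⟨q0, a1, a2, a3⟩ := hq S hoS
    obtain ⟨q, b1, b2, b3⟩ := ih hoS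
    obtain ⟨q', d1, d2, -⟩ := hq (insert j S) ho
    refine ⟨q', d1, d2, ?_⟩
    have hlt : q < q' := by
      refine lt_of_le_of_ne ?_ ?_
      · intro f hf
        rw [d2, JA_insert]
        exact Ideal.mem_sup_left ((b2 f).1 hf)
      · intro h
        apply a3 j (by
          rw [Finset.mem_insert]; rintro (h | h)
          · exact hoj h.symm
          · exact hj h)
        rw [a2, ← b2, h, d2, JA_insert]
        exact Ideal.mul_mem_left _ _ (Ideal.mem_sup_right (Ideal.mem_span_singleton_self _))
    have h2 : q.height + 1 ≤ q'.height :=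
      Order.add_one_le_of_lt (Ideal.height_strict_mono_of_isPrime_of_isPrime hlt)
    rw [Finset.card_insert_of_notMem hj, Nat.cast_add, Nat.cast_one]
    exact le_trans (by gcongr) h2

lemma q_le_mx [Fintype ι] (H : Amb K L y) (hc : ∀ i, c i ≠ 0) (hcard : 2 ≤ Fintype.card ι)
    (S : Finset ι) (f : T) (hf : L (c o) * y o * f ∈ JA L y c o ⊥ S) :
    f ∈ gen L ⊤ (y '' Set.univ) := by
  have := H.dom
  obtain ⟨θ, h1, h2⟩ := H.univ T L (fun j => ∏ i ∈ Finset.univ.erase j, L (c i))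
  have h3 : ∀ j, θ (L (c j) * y j) = ∏ i, L (c i) := by
    intro j
    rw [map_mul, h1, h2, Finset.mul_prod_erase _ (fun i => L (c i)) (Finset.mem_univ j)]
  have hker : JA L y c o ⊥ S ≤ RingHom.ker θ := by
    apply gen_le
    · intro v hv
      rw [(Submodule.mem_bot K).1 hv, map_zero]
      exact zero_mem _
    · rintro _ ⟨j, hj, rfl⟩
      rw [RingHom.mem_ker, map_sub, h3, h3, sub_self]
  have h4 := hker hf
  rw [RingHom.mem_ker, map_mul, h3] at h4
  have hθ : θ f = 0 :=
    (mul_eq_zero.1 h4).resolve_left (Finset.prod_ne_zero_iff.2 fun i _ => L_ne H (hc i))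
  obtain ⟨ε, e1, e2, e3⟩ := exists_phi H (⊤ : Submodule K V) (Set.univ : Set ι)
  have : ε.comp θ = ε := by
    apply H.ext
    · intro v
      rw [AlgHom.comp_apply, h1]
    · intro j
      rw [AlgHom.comp_apply, h2, (e3 j).2 trivial, map_prod]
      obtain ⟨i, hi⟩ : (Finset.univ.erase j).Nonempty := by
        rw [← Finset.card_pos, Finset.card_erase_of_mem (Finset.mem_univ j), Finset.card_univ]
        omega
      exact Finset.prod_eq_zero hi ((e2 _).2 trivial)
  rw [← e1, ← this, AlgHom.comp_apply, hθ, map_zero]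

theorem abs_main [FiniteDimensional K V] [Fintype ι] [IsNoetherianRing T] (H : Amb K L y)
    (hc : ∀ i, c i ≠ 0) (hcard : 2 ≤ Fintype.card ι)
    (hdim : ringKrullDim T ≤ ((Fintype.card ι + Module.finrank K V : ℕ) : WithBot ℕ∞))
    (mx : Ideal T) (hmx : mx = gen L ⊤ (y '' Set.univ))
    (J : Ideal T) (hJ : J = JA L y c o ⊥ (Finset.univ.erase o)) :
    (∃ rs : List T, rs.length = Module.finrank K V + 1 ∧ (∀ r ∈ rs, r ∈ mx) ∧
      RingTheory.Sequence.IsRegular (T ⧸ J) rs) ∧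
    (∀ rs : List T, (∀ r ∈ rs, r ∈ mx) → RingTheory.Sequence.IsRegular (T ⧸ J) rs →
      rs.length ≤ Module.finrank K V + 1) := by
  have := H.dom
  have hLm : ∀ v, L v ∈ mx := fun v => hmx ▸ L_mem_gen trivial
  have hym : ∀ j, y j ∈ mx := fun j => hmx ▸ mem_gen ⟨j, trivial, rfl⟩
  have hprime : mx.IsPrime := by
    obtain ⟨ε, e1, e2, e3⟩ := exists_phi H (⊤ : Submodule K V) (Set.univ : Set ι)
    have : mx = RingHom.ker ε := by
      ext f
      rw [RingHom.mem_ker, e1, hmx]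
    rw [this]
    exact RingHom.ker_isPrime _
  have hcd : (Finset.univ.erase o : Finset ι).card = Fintype.card ι - 1 := by
    rw [Finset.card_erase_of_mem (Finset.mem_univ o), Finset.card_univ]
  constructor
  · apply DP_exists_regular
    · rw [hJ]
      refine gen_le (fun v _ => hLm v) ?_
      rintro _ ⟨j, _, rfl⟩
      exact sub_mem (Ideal.mul_mem_left _ _ (hym o)) (Ideal.mul_mem_left _ _ (hym j))
    · exact hprime.ne_top
    · rw [hJ]
      apply claimA H hLm hym _ (Finset.notMem_erase _ _)
      rw [hcd, finrank_bot]
      omega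
  · intro rs hrs hreg
    obtain ⟨q, hq, h1, h2⟩ := exists_q (o := o) H hc (Finset.univ.erase o) (Finset.notMem_erase _ _)
    have hqm : q ≤ mx := by
      intro f hf
      rw [hmx]
      exact q_le_mx H hc hcard _ f ((h1 f).1 hf)
    obtain ⟨q', hq', hle⟩ := ass_chain mx rs (M := T ⧸ J) q hqm
      (Ideal.Quotient.mk J (L (c o) * y o)) (by
        intro r
        rw [h1, ← hJ, ← Ideal.Quotient.eq_zero_iff_mem, mul_comm _ r]
        rfl) hrs hreg.toIsWeaklyRegular
    have h3 := Ideal.height_le_ringKrullDim_of_ne_top hq'.ne_top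
    have h4 : (((Finset.univ.erase o : Finset ι).card + rs.length : ℕ) : ℕ∞) ≤ q'.height := by
      push_cast
      exact le_trans (by gcongr) hle
    have h5 : (((Finset.univ.erase o : Finset ι).card + rs.length : ℕ) : WithBot ℕ∞) ≤
        ((Fintype.card ι + Module.finrank K V : ℕ) : WithBot ℕ∞) :=
      le_trans (le_trans (by exact_mod_cast h4) h3) hdim
    have h6 : (Finset.univ.erase o : Finset ι).card + rs.length ≤
      Fintype.card ι + Module.finrank K V := by exact_mod_cast h5
    rw [hcd] at h6
    omega

end upper

end DepthSym

namespace DepthSym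

section concrete

universe u

variable {K : Type u} [Field K] {k n : ℕ}

/-- linear forms -/
noncomputable def L (K : Type u) [Field K] (k n : ℕ) :
    (Fin k → K) →ₗ[K] MvPolynomial (Fin n) (MvPolynomial (Fin k) K) :=
  Fintype.linearCombination K
    (fun i => (C (X i) : MvPolynomial (Fin n) (MvPolynomial (Fin k) K)))

lemma L_apply (v : Fin k → K) :
    L K k n v = ∑ i, v i • (C (X i) : MvPolynomial (Fin n) (MvPolynomial (Fin k) K)) := by
  rw [L, Fintype.linearCombination_apply]

lemma L_single (i : Fin k) : L K k n (Pi.single i (1 : K)) = C (X i) := by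
  rw [L, Fintype.linearCombination_apply_single, one_smul]

lemma L_C (v : Fin k → K) : L K k n v = C (∑ i, v i • X i) := by
  rw [L_apply, map_sum]
  refine Finset.sum_congr rfl fun i _ => ?_
  rw [MvPolynomial.smul_eq_C_mul (X i), map_mul, Algebra.smul_def]
  rfl

lemma L_inj : Function.Injective (L K k n) := by
  rw [← LinearMap.ker_eq_bot, LinearMap.ker_eq_bot']
  intro v hv
  rw [L_C, ← C_0, (C_injective _ _).eq_iff] at hv
  ext i
  have := congrArg (MvPolynomial.eval (Pi.single i (1 : K))) hv
  simpa [Pi.single_apply] using this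

lemma amb : Amb K (L K k n) (X : Fin n → MvPolynomial (Fin n) (MvPolynomial (Fin k) K)) where
  dom := inferInstance
  inj := L_inj
  y_ne j := X_ne_zero j
  univ B _ _ a b := by
    refine ⟨MvPolynomial.aevalTower (aeval fun i => a (Pi.single i 1)) b, fun v => ?_, fun j => ?_⟩
    · rw [L_apply, map_sum]
      conv_rhs => rw [pi_eq_sum_univ' v]
      simp only [map_sum, map_smul]
      refine Finset.sum_congr rfl fun i _ => ?_
      simp
    · simp
  ext B _ _ f g h1 h2 := by
    apply MvPolynomial.algHom_ext'
    · apply MvPolynomial.algHom_ext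
      intro i
      have := h1 (Pi.single i 1)
      rw [L_single] at this
      exact this
    · exact h2

end concrete

end DepthSym

theorem depth_of_symmetric_algebra
    {K : Type*} [Field K] {k n : ℕ} (hk : 2 ≤ k) (hkn : k ≤ n)
    (ℓ : Fin n → MvPolynomial (Fin k) K)
    (hhom : ∀ i, (ℓ i).IsHomogeneous 1)
    (hprop : ∀ i j, i ≠ j → ∀ c : K, ℓ j ≠ c • ℓ i)
    (hspan : Submodule.span K (Set.range ℓ) =
      Submodule.span K (Set.range (X : Fin k → MvPolynomial (Fin k) K)))
    (I₁ : Ideal (MvPolynomial (Fin n) (MvPolynomial (Fin k) K)))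
    (hI₁ : I₁ = Ideal.span (Set.range fun i : Fin (n - 1) =>
      C (ℓ ⟨i.1, by have := i.2; omega⟩) * X ⟨i.1, by have := i.2; omega⟩ -
        C (ℓ ⟨i.1 + 1, by have := i.2; omega⟩) * X ⟨i.1 + 1, by have := i.2; omega⟩))
    (mx : Ideal (MvPolynomial (Fin n) (MvPolynomial (Fin k) K)))
    (hmx : mx = Ideal.span
      ((Set.range fun j : Fin k => (C (X j) : MvPolynomial (Fin n) (MvPolynomial (Fin k) K))) ∪
        Set.range (X : Fin n → MvPolynomial (Fin n) (MvPolynomial (Fin k) K)))) :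
    (∃ rs : List (MvPolynomial (Fin n) (MvPolynomial (Fin k) K)),
      rs.length = k + 1 ∧ (∀ r ∈ rs, r ∈ mx) ∧
      RingTheory.Sequence.IsRegular
        (MvPolynomial (Fin n) (MvPolynomial (Fin k) K) ⧸ I₁) rs) ∧
    (∀ rs : List (MvPolynomial (Fin n) (MvPolynomial (Fin k) K)),
      (∀ r ∈ rs, r ∈ mx) →
      RingTheory.Sequence.IsRegular
        (MvPolynomial (Fin n) (MvPolynomial (Fin k) K) ⧸ I₁) rs →
      rs.length ≤ k + 1) := by
  classical
  have hlin : ∀ i, ∃ v : Fin k → K, ∑ t, v t • X t = ℓ i := by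
    intro i
    have h : ℓ i ∈ Submodule.span K (Set.range (X : Fin k → MvPolynomial (Fin k) K)) :=
      hspan ▸ Submodule.subset_span ⟨i, rfl⟩
    exact (Submodule.mem_span_range_iff_exists_fun K).1 h
  choose c hc using hlin
  have hLc : ∀ i, C (ℓ i) = DepthSym.L K k n (c i) := by
    intro i
    rw [DepthSym.L_C, hc]
  have hc0 : ∀ i, c i ≠ 0 := by
    intro i h0
    have hi : ℓ i = 0 := by
      rw [← hc i, h0]; simp
    have : ∃ j : Fin n, j ≠ i := by
      have : Nontrivial (Fin n) := Fin.nontrivial_iff_two_le.2 (by omega)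
      exact exists_ne i
    obtain ⟨j, hj⟩ := this
    exact hprop j i hj 0 (by rw [hi, zero_smul])
  let o : Fin n := ⟨0, by omega⟩
  have hmx' : mx = DepthSym.gen (DepthSym.L K k n) ⊤
      ((X : Fin n → MvPolynomial (Fin n) (MvPolynomial (Fin k) K)) '' Set.univ) := by
    rw [hmx]
    apply le_antisymm
    · rw [Ideal.span_le]
      rintro _ (⟨i, rfl⟩ | ⟨j, rfl⟩)
      · simp only
        rw [← DepthSym.L_single]
        exact DepthSym.L_mem_gen trivial
      · exact DepthSym.mem_gen ⟨j, trivial, rfl⟩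
    · apply DepthSym.gen_le
      · intro v _
        rw [DepthSym.L_apply]
        refine sum_mem fun i _ => ?_
        exact Submodule.smul_of_tower_mem _ (v i) (Ideal.subset_span (Or.inl ⟨i, rfl⟩))
      · rintro _ ⟨j, _, rfl⟩
        exact Ideal.subset_span (Or.inr ⟨j, rfl⟩)
  have hJ : I₁ = DepthSym.JA (DepthSym.L K k n)
      (X : Fin n → MvPolynomial (Fin n) (MvPolynomial (Fin k) K)) c o ⊥
      (Finset.univ.erase o) := by
    apply le_antisymm
    · have h1 : ∀ i : Fin n, C (ℓ o) * X o - C (ℓ i) * X i ∈ DepthSym.JA (DepthSym.L K k n)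
          (X : Fin n → MvPolynomial (Fin n) (MvPolynomial (Fin k) K)) c o ⊥
          (Finset.univ.erase o) := by
        intro i
        by_cases h : i = o
        · rw [h, sub_self]; exact zero_mem _
        · rw [hLc, hLc]
          exact DepthSym.mem_gen ⟨i, by simp [h], rfl⟩
      rw [hI₁, Ideal.span_le]
      rintro _ ⟨i, rfl⟩
      have h2 := sub_mem (h1 ⟨i.1 + 1, by have := i.2; omega⟩) (h1 ⟨i.1, by have := i.2; omega⟩)
      rw [sub_sub_sub_cancel_left] at h2
      exact h2
    · have h1 : ∀ (t : ℕ) (ht : t < n), C (ℓ o) * X o - C (ℓ ⟨t, ht⟩) * X ⟨t, ht⟩ ∈ I₁ := by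
        intro t
        induction t with
        | zero => intro ht; rw [sub_self]; exact zero_mem _
        | succ t ih =>
          intro ht
          have h2 := ih (by omega)
          have h3 : C (ℓ ⟨t, by omega⟩) * X ⟨t, by omega⟩ -
              C (ℓ ⟨t + 1, ht⟩) * X ⟨t + 1, ht⟩ ∈ I₁ := by
            rw [hI₁]
            exact Ideal.subset_span ⟨⟨t, by omega⟩, rfl⟩
          have h4 := add_mem h2 h3
          rwa [sub_add_sub_cancel] at h4
      apply DepthSym.gen_le
      · intro v hv
        rw [(Submodule.mem_bot K).1 hv, map_zero]
        exact zero_mem _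
      · rintro _ ⟨j, _, rfl⟩
        simp only
        rw [← hLc, ← hLc]
        exact h1 j.1 j.2
  have hdim : ringKrullDim (MvPolynomial (Fin n) (MvPolynomial (Fin k) K)) ≤
      ((Fintype.card (Fin n) + Module.finrank K (Fin k → K) : ℕ) : WithBot ℕ∞) := by
    rw [MvPolynomial.ringKrullDim_of_isNoetherianRing,
      MvPolynomial.ringKrullDim_of_isNoetherianRing, ringKrullDim_eq_zero_of_field]
    simp [add_comm]
  have key := DepthSym.abs_main (c := c) (o := o) DepthSym.amb hc0 (by simp; omega) hdim mx hmx' I₁ hJ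
  rw [Module.finrank_fin_fun] at key
  exact key
end
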